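/- arXiv:1603.03887 — 2 statements merged into one kernel-verified Lean document; each statement's English description precedes it below -/
import Mathlib

section
/- For every point a in the inverse limit space X there exists an embedding g : X → ℝ² such that the point g(a) is accessible from the complement of g(X). -/
/-- `T : ℝ → ℝ` is a unimodal map on `[0,1]` with critical point `c`:
continuous, maps `[0,1]` into itself, fixes `0`, strictly increasing on `[0,c]`
and strictly decreasing on `[c,1]`, with `c ∈ (0,1)`. -/
def IsUnimodal (T : ℝ → ℝ) (c : ℝ) : Prop :=
  ContinuousOn T (Set.Icc 0 1) ∧ Set.MapsTo T (Set.Icc 0 1) (Set.Icc 0 1) ∧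
    T 0 = 0 ∧ 0 < c ∧ c < 1 ∧
    StrictMonoOn T (Set.Icc 0 c) ∧ StrictAntiOn T (Set.Icc c 1)

/-- The inverse limit `X = lim←([0,1], T)`, modelled as sequences
`x : ℕ → ℝ` where `x n` represents the coordinate `x_{-n}`. -/
def invLimitSet (T : ℝ → ℝ) : Set (ℕ → ℝ) :=
  {x | (∀ n, x n ∈ Set.Icc (0 : ℝ) 1) ∧ ∀ n, T (x (n + 1)) = x n}

/-- The inverse limit space, with the (product) subspace topology, which is the
topology induced by the metric `d(x,y) = Σ_{i≤0} 2^i |x_i - y_i|`. -/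
abbrev InvLimit (T : ℝ → ℝ) : Type := ↥(invLimitSet T)

/-- A point `a` of a set `K ⊆ ℝ²` is accessible from the complement of `K` if there
is an arc in the plane with endpoint `a` meeting `K` only in `a`. -/
def Accessible (K : Set (ℝ × ℝ)) (a : ℝ × ℝ) : Prop :=
  ∃ γ : ℝ → ℝ × ℝ, ContinuousOn γ (Set.Icc 0 1) ∧ Set.InjOn γ (Set.Icc 0 1) ∧
    γ 0 = a ∧ γ '' Set.Icc 0 1 ∩ K = {a}

/-!
If `Φ` is a continuous injection of the plane, then `x ↦ Φ (x n, 0)` is a picture of the inverse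
limit that resolves its `n`-th coordinate. Replacing the segment under `Φ` by a thin copy of the
graph of `T` gives `x ↦ Φ (T (x (n + 1)), ε * (x (n + 1) - a (n + 1)))`, which resolves the next
coordinate and is as close to the old picture as desired when `ε → 0`. If `a (n + 1)` is the first
or the last point of its fiber, then for a suitable sign of `ε` no strand of the graph lies above
it, so that a vertical ray at `a` stays free at every stage. Being injective and missing the open
ray are countable intersections of open conditions, each of them satisfied by all late stages, so
by Baire's theorem some limit of stages has both properties. A unimodal map has at most two points
in each fiber, and so each of them is an end of its fiber.
-/

open Set Filter Topology

theorem exists_mem_closure_iUnion_forall_mem {E ι : Type*} [PseudoMetricSpace E] [CompleteSpace E]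
    [Countable ι] {S : ℕ → Set E} {O : ι → Set E} (hne : (S 0).Nonempty)
    (hS : ∀ n, S n ⊆ closure (S (n + 1))) (hO : ∀ i, IsOpen (O i))
    (hSO : ∀ i, ∃ m, ∀ n, m ≤ n → S n ⊆ O i) :
    ∃ f ∈ closure (⋃ n, S n), ∀ i, f ∈ O i := by
  have hmono : Monotone fun n ↦ closure (S n) :=
    monotone_nat_of_le_succ fun n ↦ closure_minimal (hS n) isClosed_closure
  let M : Set E := closure (⋃ n, S n)
  have hdense : ∀ i, Dense ((↑) ⁻¹' O i : Set M) := by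
    intro i
    obtain ⟨m, hm⟩ := hSO i
    rw [Subtype.dense_iff, Subtype.image_preimage_coe]
    refine closure_minimal (iUnion_subset fun n ↦ ?_) isClosed_closure
    calc S n ⊆ closure (S (max n m)) := subset_closure.trans (hmono (le_max_left n m))
      _ ⊆ closure (M ∩ O i) := closure_mono <| subset_inter
          ((subset_iUnion S _).trans subset_closure) (hm _ (le_max_right n m))
  have : CompleteSpace M := isClosed_closure.completeSpace_coe
  have : Nonempty M := (hne.mono ((subset_iUnion S 0).trans subset_closure)).to_subtype
  obtain ⟨⟨f, hfM⟩, hf⟩ :=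
    (dense_iInter_of_isOpen (fun i ↦ (hO i).preimage continuous_subtype_val) hdense).nonempty
  exact ⟨f, hfM, fun i ↦ mem_iInter.1 hf i⟩

theorem isOpen_setOfPred_forall_ne {X Y : Type*} [TopologicalSpace X] [LocallyCompactSpace X]
    [TopologicalSpace Y] [T2Space Y] {K : Set (X × X)} (hK : IsCompact K) :
    IsOpen {f : C(X, Y) | ∀ p ∈ K, f p.1 ≠ f p.2} := by
  rw [isOpen_iff_mem_nhds]
  intro f hf
  refine hK.eventually_forall_of_forall_eventually fun p hp ↦ ?_
  have : IsOpen {z : C(X, Y) × (X × X) | z.1 z.2.1 ≠ z.1 z.2.2} :=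
    isOpen_ne_fun (by fun_prop) (by fun_prop)
  exact this.mem_nhds (hf p hp)

/-- The first coordinate of the normalized folding map, on the antidiagonal `t + y = x` and as a
function of the height `y`. It interpolates linearly from `V x` at `y = 0` to `0` at `y = x`, where
the antidiagonal meets the vertical axis, and has slope one elsewhere. For `x ≤ 0` the numerator
`max 0 (min x y)` vanishes, so the value is `V x + y`, also at `x = 0` where the quotient is
`0 / 0 = 0`. -/
noncomputable def foldCoord (V : ℝ → ℝ) (x y : ℝ) : ℝ :=
  (1 - max 0 (min x y) / x) * V x + (y - max 0 (min x y))

theorem foldCoord_zero_right (V : ℝ → ℝ) (x : ℝ) : foldCoord V x 0 = V x := by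
  simp [foldCoord]

theorem foldCoord_self {V : ℝ → ℝ} (hV0 : V 0 = 0) {x : ℝ} (hx : 0 ≤ x) :
    foldCoord V x x = 0 := by
  rcases hx.eq_or_lt with rfl | hx
  · simp [foldCoord, hV0]
  · simp [foldCoord, hx.le, hx.ne']

theorem continuous_foldCoord {V : ℝ → ℝ} (hV : Continuous V) (hV0 : V 0 = 0) :
    Continuous fun p : ℝ × ℝ ↦ foldCoord V p.1 p.2 := by
  have hquot : ∀ p : ℝ × ℝ, |1 - max 0 (min p.1 p.2) / p.1| ≤ 1 := by
    rintro ⟨x, y⟩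
    rcases le_or_gt x 0 with hx | hx
    · simp [max_eq_left ((min_le_left x y).trans hx)]
    · rw [abs_le]
      have h₀ : 0 ≤ max 0 (min x y) / x := by positivity
      have h₁ : max 0 (min x y) / x ≤ 1 := (div_le_one hx).2 (max_le hx.le (min_le_left x y))
      constructor <;> linarith
  refine Continuous.add (continuous_iff_continuousAt.2 fun p ↦ ?_) (by fun_prop)
  by_cases hp : p.1 = 0
  · have hlim : Tendsto (fun p : ℝ × ℝ ↦ V p.1) (𝓝 p) (𝓝 0) := by
      simpa [Function.comp_def, hp, hV0] using (hV.comp continuous_fst).tendsto p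
    simpa [ContinuousAt, hp, hV0] using
      bdd_le_mul_tendsto_zero' 1 (Eventually.of_forall hquot) hlim
  · have := hV.continuousAt (x := p.1)
    fun_prop (disch := assumption)

theorem foldCoord_strictMono {V : ℝ → ℝ} {x : ℝ} (hV : 0 < x → V x < 0) :
    StrictMono (foldCoord V x) := by
  intro y z hyz
  rcases le_or_gt x 0 with hx | hx
  · simpa [foldCoord, max_eq_left ((min_le_left x _).trans hx)] using hyz
  set q : ℝ → ℝ := fun w ↦ max 0 (min x w)
  have hq : q y ≤ q z := max_le_max_left 0 (min_le_min_left x hyz.le)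
  have hqLip : q z - q y ≤ z - y := by
    simp only [q]
    grind
  have hslope : 0 < -V x / x := div_pos (neg_pos.2 (hV hx)) hx
  have hdiff : foldCoord V x z - foldCoord V x y =
      -V x / x * (q z - q y) + ((z - y) - (q z - q y)) := by
    simp only [foldCoord, q]
    ring
  rw [← sub_pos, hdiff]
  rcases hq.eq_or_lt with hq | hq
  · simpa [hq] using hyz
  · exact add_pos_of_pos_of_nonneg (mul_pos hslope (sub_pos.2 hq)) (sub_nonneg.2 hqLip)

/-- `F` is a continuous injection of the plane which folds the horizontal segment `s × {0}` into a
copy of the graph of `T` turned on its side, of slope `ε`, and keeps the upward vertical ray at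
`(b, 0)` vertical. For `0 < ε` the part of `s` to the right of `b` ends up above the `x`-axis, for
`ε < 0` the part to the left. -/
structure IsFold (T : ℝ → ℝ) (s : Set ℝ) (b ε : ℝ) (F : ℝ × ℝ → ℝ × ℝ) : Prop where
  continuous : Continuous F
  injective : Function.Injective F
  apply_segment : ∀ t ∈ s, F (t, 0) = (T t, ε * (t - b))
  apply_ray : ∀ y, 0 ≤ y → F (b, y) = (T b, y)

theorem isFold_of_neg {V : ℝ → ℝ} (hV : Continuous V) (hV0 : V 0 = 0)
    (hneg : ∀ x, 0 < x → V x < 0) :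
    IsFold V univ 0 1 fun p ↦ (foldCoord V (p.1 + p.2) p.2, p.1 + p.2) where
  continuous := ((continuous_foldCoord hV hV0).comp
    ((continuous_fst.add continuous_snd).prodMk continuous_snd)).prodMk
      (continuous_fst.add continuous_snd)
  injective := by
    rintro ⟨t, y⟩ ⟨t', y'⟩ h
    simp only [Prod.mk.injEq] at h
    obtain ⟨hcoord, hsum⟩ := h
    rw [hsum] at hcoord
    obtain rfl := (foldCoord_strictMono (hneg _)).injective hcoord
    simpa using hsum
  apply_segment t _ := by simp [foldCoord_zero_right]
  apply_ray y hy := by simp [foldCoord_self hV0 hy, hV0]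

theorem IsFold.congr {T U : ℝ → ℝ} {s t : Set ℝ} {b ε : ℝ} {F : ℝ × ℝ → ℝ × ℝ}
    (hF : IsFold U t b ε F) (hst : s ⊆ t) (hUT : EqOn U T s) (hb : b ∈ s) : IsFold T s b ε F where
  continuous := hF.continuous
  injective := hF.injective
  apply_segment x hx := by rw [hF.apply_segment x (hst hx), hUT hx]
  apply_ray y hy := by rw [hF.apply_ray y hy, hUT hb]

theorem IsFold.neg {T : ℝ → ℝ} {s : Set ℝ} {b ε : ℝ} {F : ℝ × ℝ → ℝ × ℝ}
    (hF : IsFold T s b ε F) : IsFold (-T) s b ε fun p ↦ (-(F p).1, (F p).2) where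
  continuous := by have := hF.continuous; fun_prop
  injective p q h := hF.injective (by simpa [Prod.ext_iff] using h)
  apply_segment t ht := by simp [hF.apply_segment t ht]
  apply_ray y hy := by simp [hF.apply_ray y hy]

theorem exists_isFold_univ {U : ℝ → ℝ} (hU : Continuous U) {b ε : ℝ} (hε : ε ≠ 0)
    (hlt : ∀ t, 0 < ε * (t - b) → U t < U b) : ∃ F, IsFold U univ b ε F := by
  let V : ℝ → ℝ := fun z ↦ U (b + z / ε) - U b
  have hV : Continuous V := by fun_prop
  have hV0 : V 0 = 0 := by simp [V]
  have hneg : ∀ z, 0 < z → V z < 0 := fun z hz ↦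
    sub_neg.2 (hlt _ (by simpa [mul_div_cancel₀ z hε] using hz))
  have hFV := isFold_of_neg hV hV0 hneg
  set G : ℝ × ℝ → ℝ × ℝ := fun p ↦ (foldCoord V (p.1 + p.2) p.2, p.1 + p.2)
  refine ⟨fun p ↦ (U b, 0) + G (ε * (p.1 - b), p.2), ?_, ?_, ?_, ?_⟩
  · have := hFV.continuous
    fun_prop
  · intro p q h
    simpa [Prod.ext_iff, hε] using hFV.injective (add_left_cancel h)
  · intro t _
    simp [hFV.apply_segment _ (mem_univ _), V, hε]
  · intro y hy
    simp [hFV.apply_ray y hy, hV0]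

theorem exists_isFold_of_lt {T : ℝ → ℝ} {l u b ε : ℝ} (hT : ContinuousOn T (Icc l u))
    (hb : b ∈ Icc l u) (hε : ε ≠ 0) (hlt : ∀ t ∈ Icc l u, 0 < ε * (t - b) → T t < T b) :
    ∃ F, IsFold T (Icc l u) b ε F := by
  have hlu : l ≤ u := hb.1.trans hb.2
  let r : ℝ → ℝ := fun t ↦ projIcc l u hlu t
  have hr : ∀ t ∈ Icc l u, r t = t := fun t ht ↦ congrArg Subtype.val (projIcc_of_mem hlu ht)
  let U : ℝ → ℝ := fun t ↦ T (r t) - |t - r t|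
  have hUT : EqOn U T (Icc l u) := fun t ht ↦ by simp [U, hr t ht]
  have hrc : Continuous r := continuous_subtype_val.comp continuous_projIcc
  have hU : Continuous U :=
    (hT.comp_continuous hrc fun t ↦ (projIcc l u hlu t).2).sub (continuous_id.sub hrc).abs
  have hUlt : ∀ t, 0 < ε * (t - b) → U t < U b := by
    intro t ht
    rw [hUT hb]
    by_cases hrb : r t = b
    · have htb : t - b ≠ 0 := right_ne_zero_of_mul ht.ne'
      simpa [U, hrb] using htb
    · have hmono : Monotone r := fun x y hxy ↦ monotone_projIcc hlu hxy
      have hside : 0 < ε * (r t - b) := by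
        rcases mul_pos_iff.1 ht with ⟨hε, htb⟩ | ⟨hε, htb⟩
        · have : b ≤ r t := hr b hb ▸ hmono (sub_pos.1 htb).le
          exact mul_pos hε (sub_pos.2 (this.lt_of_ne' hrb))
        · have : r t ≤ b := hr b hb ▸ hmono (sub_neg.1 htb).le
          exact mul_pos_of_neg_of_neg hε (sub_neg.2 (this.lt_of_ne hrb))
      have := hlt (r t) (projIcc l u hlu t).2 hside
      exact (sub_le_self _ (abs_nonneg _)).trans_lt this
  obtain ⟨F, hF⟩ := exists_isFold_univ hU hε hUlt
  exact ⟨F, hF.congr (subset_univ _) hUT hb⟩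

theorem exists_isFold_of_ne {T : ℝ → ℝ} {l u b ε : ℝ} (hT : ContinuousOn T (Icc l u))
    (hb : b ∈ Icc l u) (hε : ε ≠ 0) (hne : ∀ t ∈ Icc l u, 0 < ε * (t - b) → T t ≠ T b) :
    ∃ F, IsFold T (Icc l u) b ε F := by
  let J : Set ℝ := {t ∈ Icc l u | 0 < ε * (t - b)}
  have hJ : IsPreconnected J := by
    have : OrdConnected {t : ℝ | 0 < ε * (t - b)} := ⟨fun x hx y hy z hz ↦ by
      simp only [mem_ofPred_eq] at hx hy ⊢
      rcases hε.lt_or_gt with hε | hε <;> nlinarith [hz.1, hz.2]⟩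
    exact (ordConnected_Icc.inter this).isPreconnected
  have hside : T '' J ⊆ Iio (T b) ∨ T '' J ⊆ Ioi (T b) := by
    refine IsPreconnected.subset_or_subset isOpen_Iio isOpen_Ioi Ioi_disjoint_Iio_same.symm ?_
      (hJ.image T (hT.mono (sep_subset _ _)))
    rintro _ ⟨t, ht, rfl⟩
    exact (hne t ht.1 ht.2).lt_or_gt
  rcases hside with hbelow | habove
  · exact exists_isFold_of_lt hT hb hε fun t ht hεt ↦ hbelow ⟨t, ⟨ht, hεt⟩, rfl⟩
  · obtain ⟨F, hF⟩ := exists_isFold_of_lt hT.neg hb hε fun t ht hεt ↦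
      neg_lt_neg (habove ⟨t, ⟨ht, hεt⟩, rfl⟩)
    exact ⟨_, by simpa using hF.neg⟩

/-- The point `b` is an end of its fiber: the least or the greatest among the points of `s` with
the same image under `T`. This is what leaves one side of `b` free to be folded over. -/
def IsFiberEnd (T : ℝ → ℝ) (s : Set ℝ) (b : ℝ) : Prop :=
  IsLeast (s ∩ T ⁻¹' {T b}) b ∨ IsGreatest (s ∩ T ⁻¹' {T b}) b

theorem IsFiberEnd.mem {T : ℝ → ℝ} {s : Set ℝ} {b : ℝ} (hb : IsFiberEnd T s b) : b ∈ s :=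
  hb.elim (fun h ↦ h.1.1) fun h ↦ h.1.1

theorem IsFiberEnd.ne_left_or_ne_right {T : ℝ → ℝ} {s : Set ℝ} {b : ℝ} (hb : IsFiberEnd T s b) :
    (∀ t ∈ s, t < b → T t ≠ T b) ∨ ∀ t ∈ s, b < t → T t ≠ T b :=
  hb.imp (fun h _ ht htb hTt ↦ htb.not_ge (h.2 ⟨ht, hTt⟩))
    fun h _ ht hbt hTt ↦ hbt.not_ge (h.2 ⟨ht, hTt⟩)

theorem IsFiberEnd.zero_mem_closure_setOfPred_isFold {T : ℝ → ℝ} {l u b : ℝ}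
    (hT : ContinuousOn T (Icc l u)) (hb : IsFiberEnd T (Icc l u) b) :
    (0 : ℝ) ∈ closure {ε | ∃ F, IsFold T (Icc l u) b ε F} := by
  rcases hb.ne_left_or_ne_right with hleft | hright
  · have hneg : Iio (0 : ℝ) ⊆ {ε | ∃ F, IsFold T (Icc l u) b ε F} := fun ε hε ↦
      exists_isFold_of_ne hT hb.mem hε.ne fun t ht hεt ↦
        hleft t ht (sub_neg.1 (neg_of_mul_pos_right hεt hε.le))
    exact closure_mono hneg (by simp)
  · have hpos : Ioi (0 : ℝ) ⊆ {ε | ∃ F, IsFold T (Icc l u) b ε F} := fun ε hε ↦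
      exists_isFold_of_ne hT hb.mem hε.ne' fun t ht hεt ↦
        hright t ht (sub_pos.1 (pos_of_mul_pos_right hεt hε.le))
    exact closure_mono hpos (by simp)

theorem isCompact_invLimitSet {T : ℝ → ℝ} (hT : ContinuousOn T (Icc 0 1)) :
    IsCompact (invLimitSet T) := by
  let cube : Set (ℕ → ℝ) := pi univ fun _ ↦ Icc 0 1
  have hcube : IsCompact cube := isCompact_univ_pi fun _ ↦ isCompact_Icc
  have heq : invLimitSet T = ⋂ n, {x ∈ cube | T (x (n + 1)) = x n} := by
    ext x
    simp only [invLimitSet, cube, mem_univ_pi, mem_iInter, mem_ofPred_eq, forall_and,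
      forall_const]
  rw [heq]
  refine hcube.of_isClosed_subset (isClosed_iInter fun n ↦ ?_)
    (iInter_subset_of_subset 0 (sep_subset _ _))
  have hTn : ContinuousOn (fun x : ℕ → ℝ ↦ T (x (n + 1))) cube :=
    hT.comp (continuous_apply (n + 1)).continuousOn fun x hx ↦ hx (n + 1) (mem_univ _)
  exact (hTn.prodMk (continuous_apply n).continuousOn).preimage_isClosed_of_isClosed
    hcube.isClosed isClosed_diagonal

@[fun_prop]
theorem InvLimit.continuous_coord {T : ℝ → ℝ} {Z : Type*} [TopologicalSpace Z] {x : Z → InvLimit T}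
    (hx : Continuous x) (n : ℕ) : Continuous fun z ↦ (x z).1 n :=
  (continuous_apply n).comp (continuous_subtype_val.comp hx)

theorem InvLimit.coord_eq_of_le {T : ℝ → ℝ} {x y : InvLimit T} {m n : ℕ} (hmn : m ≤ n)
    (h : x.1 n = y.1 n) : x.1 m = y.1 m := by
  induction n, hmn using Nat.le_induction with
  | base => exact h
  | succ n _ ih => exact ih (by rw [← x.2.2 n, ← y.2.2 n, h])

/-- The maps from the inverse limit to the plane that factor through the `n`-th coordinate as
`x ↦ Φ (x n, 0)`, where `Φ` is a continuous injection of the plane sending the upward vertical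
ray at `(a n, 0)` identically onto the one at `(a 0, 0)`. They are the finite stages of the
embedding; the ray is the future arc of access to `a`. -/
def flattenings {T : ℝ → ℝ} (a : InvLimit T) (n : ℕ) : Set C(InvLimit T, ℝ × ℝ) :=
  {f | ∃ Φ : ℝ × ℝ → ℝ × ℝ, Continuous Φ ∧ Function.Injective Φ ∧
    (∀ y, 0 ≤ y → Φ (a.1 n, y) = (a.1 0, y)) ∧ ∀ x : InvLimit T, f x = Φ (x.1 n, 0)}

section Flattenings

variable {T : ℝ → ℝ} {a : InvLimit T}

theorem flattenings_zero_nonempty (a : InvLimit T) : (flattenings a 0).Nonempty :=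
  ⟨⟨fun x ↦ (x.1 0, 0), by fun_prop⟩, id, continuous_id, Function.injective_id,
    fun _ _ ↦ rfl, fun _ ↦ rfl⟩

theorem apply_self_of_mem_flattenings {n : ℕ} {f : C(InvLimit T, ℝ × ℝ)}
    (hf : f ∈ flattenings a n) : f a = (a.1 0, 0) := by
  obtain ⟨Φ, -, -, hray, hfΦ⟩ := hf
  rw [hfΦ, hray 0 le_rfl]

theorem apply_eq_of_mem_flattenings {n : ℕ} {f : C(InvLimit T, ℝ × ℝ)}
    (hf : f ∈ flattenings a n) {x y : InvLimit T} (hxy : f x = f y) : x.1 n = y.1 n := by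
  obtain ⟨Φ, -, hinj, -, hfΦ⟩ := hf
  rw [hfΦ, hfΦ] at hxy
  exact (Prod.ext_iff.1 (hinj hxy)).1

theorem apply_ne_of_mem_flattenings {n : ℕ} {f : C(InvLimit T, ℝ × ℝ)}
    (hf : f ∈ flattenings a n) (x : InvLimit T) {w : ℝ} (hw : 0 < w) : f x ≠ (a.1 0, w) := by
  obtain ⟨Φ, -, hinj, hray, hfΦ⟩ := hf
  rw [hfΦ, ← hray w hw.le]
  exact fun h ↦ hw.ne (Prod.ext_iff.1 (hinj h)).2

theorem flattenings_subset_closure_succ (hT : ContinuousOn T (Icc 0 1)) {n : ℕ}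
    (ha : IsFiberEnd T (Icc 0 1) (a.1 (n + 1))) :
    flattenings a n ⊆ closure (flattenings a (n + 1)) := by
  rintro f ⟨Φ, hΦ, hinj, hray, hfΦ⟩
  let H : C(ℝ × InvLimit T, ℝ × ℝ) :=
    ⟨fun p ↦ Φ (p.2.1 n, p.1 * (p.2.1 (n + 1) - a.1 (n + 1))), by fun_prop⟩
  have hH0 : H.curry 0 = f := by
    ext1 x
    simp [H, hfΦ]
  have hmem : MapsTo H.curry {ε | ∃ F, IsFold T (Icc 0 1) (a.1 (n + 1)) ε F}
      (flattenings a (n + 1)) := by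
    rintro ε ⟨F, hF⟩
    refine ⟨Φ ∘ F, hΦ.comp hF.continuous, hinj.comp hF.injective, fun y hy ↦ ?_, fun x ↦ ?_⟩
    · rw [Function.comp_apply, hF.apply_ray y hy, a.2.2, hray y hy]
    · rw [Function.comp_apply, hF.apply_segment _ (x.2.1 _), x.2.2]
      rfl
  rw [← hH0]
  exact map_mem_closure H.curry.continuous (ha.zero_mem_closure_setOfPred_isFold hT) hmem

theorem apply_self_of_mem_closure_flattenings {f : C(InvLimit T, ℝ × ℝ)}
    (hf : f ∈ closure (⋃ n, flattenings a n)) : f a = (a.1 0, 0) := by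
  have hclosed : IsClosed {f : C(InvLimit T, ℝ × ℝ) | f a = (a.1 0, 0)} :=
    isClosed_eq (by fun_prop) continuous_const
  exact closure_minimal (iUnion_subset fun n f ↦ apply_self_of_mem_flattenings) hclosed hf

end Flattenings

theorem exists_injective_avoiding_ray {T : ℝ → ℝ} (hT : ContinuousOn T (Icc 0 1)) (a : InvLimit T)
    (ha : ∀ n, IsFiberEnd T (Icc 0 1) (a.1 (n + 1))) :
    ∃ f : C(InvLimit T, ℝ × ℝ), Function.Injective f ∧ f a = (a.1 0, 0) ∧
      ∀ x w, 0 < w → f x ≠ (a.1 0, w) := by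
  have : CompactSpace (InvLimit T) := isCompact_iff_compactSpace.1 (isCompact_invLimitSet hT)
  let far : ℕ × ℕ → Set (InvLimit T × InvLimit T) :=
    fun i ↦ {p | 1 / ((i.2 : ℝ) + 1) ≤ |p.1.1 i.1 - p.2.1 i.1|}
  let ray : ℕ → Set (ℝ × ℝ) := fun k ↦ {a.1 0} ×ˢ Ici (1 / ((k : ℝ) + 1))
  let O : ℕ × ℕ → Set C(InvLimit T, ℝ × ℝ) :=
    fun i ↦ {f | ∀ p ∈ far i, f p.1 ≠ f p.2} ∩ {f | MapsTo f univ (ray i.2)ᶜ}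
  have hO : ∀ i, IsOpen (O i) := fun i ↦
    (isOpen_setOfPred_forall_ne (isClosed_le (by fun_prop) (by fun_prop)).isCompact).inter
      (ContinuousMap.isOpen_setOfPred_mapsTo isCompact_univ
        (isClosed_singleton.prod isClosed_Ici).isOpen_compl)
  have hmem : ∀ i, ∃ m, ∀ n, m ≤ n → flattenings a n ⊆ O i := by
    refine fun i ↦ ⟨i.1, fun n hn f hf ↦ ⟨fun p hp hfp ↦ ?_, ?_⟩⟩
    · have hpos : 0 < |p.1.1 i.1 - p.2.1 i.1| := Nat.one_div_pos_of_nat.trans_le hp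
      exact sub_ne_zero.1 (abs_pos.1 hpos)
        (InvLimit.coord_eq_of_le hn (apply_eq_of_mem_flattenings hf hfp))
    · rintro x - ⟨h₁, h₂⟩
      exact apply_ne_of_mem_flattenings hf x (Nat.one_div_pos_of_nat.trans_le h₂)
        (Prod.ext h₁ rfl)
  obtain ⟨f, hf, hfO⟩ := exists_mem_closure_iUnion_forall_mem (flattenings_zero_nonempty a)
    (fun n ↦ flattenings_subset_closure_succ hT (ha n)) hO hmem
  refine ⟨f, fun x y hxy ↦ ?_, apply_self_of_mem_closure_flattenings hf, fun x w hw hx ↦ ?_⟩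
  · by_contra hne
    obtain ⟨m, hm⟩ := Function.ne_iff.1 (Subtype.coe_ne_coe.2 hne)
    obtain ⟨k, hk⟩ := exists_nat_one_div_lt (abs_pos.2 (sub_ne_zero.2 hm))
    exact (hfO (m, k)).1 (x, y) hk.le hxy
  · obtain ⟨k, hk⟩ := exists_nat_one_div_lt hw
    exact (hfO (0, k)).2 (mem_univ x) (by simpa [ray, hx] using hk.le)

theorem stmt0_general {T : ℝ → ℝ} (hT : ContinuousOn T (Icc 0 1)) (a : InvLimit T)
    (ha : ∀ n, IsFiberEnd T (Icc 0 1) (a.1 (n + 1))) :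
    ∃ g : InvLimit T → ℝ × ℝ, Topology.IsEmbedding g ∧ Accessible (Set.range g) (g a) := by
  have : CompactSpace (InvLimit T) := isCompact_iff_compactSpace.1 (isCompact_invLimitSet hT)
  obtain ⟨g, hinj, hga, hray⟩ := exists_injective_avoiding_ray hT a ha
  refine ⟨g, (g.continuous.isClosedEmbedding hinj).isEmbedding, fun w ↦ (a.1 0, w), by fun_prop,
    fun v _ w _ h ↦ congrArg Prod.snd h, hga.symm, Subset.antisymm ?_ ?_⟩
  · rintro _ ⟨⟨w, hw, rfl⟩, x, hx⟩
    rcases hw.1.eq_or_lt with rfl | hw0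
    · exact hga.symm
    · exact absurd hx (hray x w hw0)
  · rintro _ rfl
    exact ⟨⟨0, by simp, hga.symm⟩, a, rfl⟩

theorem IsUnimodal.isFiberEnd {T : ℝ → ℝ} {c : ℝ} (hT : IsUnimodal T c) {b : ℝ}
    (hb : b ∈ Icc 0 1) : IsFiberEnd T (Icc 0 1) b := by
  obtain ⟨-, -, -, -, -, hmono, hanti⟩ := hT
  rcases le_total b c with hbc | hcb
  · refine Or.inl ⟨⟨hb, rfl⟩, fun t ht ↦ le_of_not_gt fun htb ↦ ?_⟩
    exact (hmono ⟨ht.1.1, htb.le.trans hbc⟩ ⟨hb.1, hbc⟩ htb).ne ht.2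
  · refine Or.inr ⟨⟨hb, rfl⟩, fun t ht ↦ le_of_not_gt fun hbt ↦ ?_⟩
    exact (hanti ⟨hcb, hb.2⟩ ⟨hcb.trans hbt.le, ht.1.2⟩ hbt).ne ht.2

/-- For every point `a ∈ X` there exists an embedding `g` of `X` in the plane
such that `g a` is accessible. -/
theorem stmt0 (T : ℝ → ℝ) (c : ℝ) (hT : IsUnimodal T c) (a : InvLimit T) :
    ∃ g : InvLimit T → ℝ × ℝ, Topology.IsEmbedding g ∧ Accessible (Set.range g) (g a) :=
  stmt0_general hT.1 a fun n ↦ hT.isFiberEnd (a.2.1 (n + 1))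
end

section
/- If T is a unimodal interval map with h_top(T)>0, then there exist uncountably many pairwise non-equivalent embeddings of X into the plane, i.e., an uncountable family of embeddings of X into ℝ² such that no two members of the family are equivalent. -/
/-- Two planar embeddings `g₁, g₂` of a space `A` are equivalent if some homeomorphism
of the plane maps the image of `g₁` onto the image of `g₂` (equivalently, there is a
homeomorphism between the images extending to a homeomorphism of the plane). -/
def EquivalentEmbeddings {A : Type*} (g₁ g₂ : A → ℝ × ℝ) : Prop :=
  ∃ H : (ℝ × ℝ) ≃ₜ (ℝ × ℝ), H '' Set.range g₁ = Set.range g₂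

/-! The arc component of `(…, 0, 0)` in `X` is a ray, and every self-homeomorphism of `X` preserves
it. An embedding of `X` is a limit of homeomorphisms of the plane built from maps of the form
`(x, y) ↦ (T x + y, κ x)` with `κ ≠ 0` small; the sign of `κ` at stage `n` decides whether the fold
of `T` is made to the left or to the right, and so can be chosen according to any sequence of signs
`ε`. For two points of the ray at a definite distance from each other, the difference vector of
their images then turns, up to a bounded error, by half a turn of sign `ε i` for each `i` at which
`T` reverses the order of their coordinates of index `i + 1`.

A homeomorphism of the plane carrying one such embedding onto another carries pairs of points of
the ray to pairs of points of the ray, and multiplies the angles of their differences by some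
`d = ±1` up to a bounded error. Apply this to pairs which follow, in opposite phases, a period-two
orbit straddling the critical point, so that their order is reversed at every step and the angles
are `π` times the partial sums `σ n` of the signs of the first embedding. If `τ n` are those of the
second, the signed number of reversals of the image pair is within `n / 2` of `τ n / 2`, at
whichever of the `n` steps they occur. Thus `|2 * d * σ n - τ n| ≤ n + C`, or the same with `σ` and
`τ` exchanged, and this fails for suitable signs that are constant on blocks of rapidly growing
length.

Positive entropy enters only through `T (T c) < c < T c`: otherwise the number of monotone pieces of
`T^[n]` grows at most linearly in `n`. -/

open Set Filter Topology

namespace IsUnimodal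

variable {T : ℝ → ℝ} {c : ℝ}

lemma continuousOn (hT : IsUnimodal T c) : ContinuousOn T (Icc 0 1) := hT.1

lemma mapsTo (hT : IsUnimodal T c) : MapsTo T (Icc 0 1) (Icc 0 1) := hT.2.1

lemma apply_zero (hT : IsUnimodal T c) : T 0 = 0 := hT.2.2.1

lemma crit_pos (hT : IsUnimodal T c) : 0 < c := hT.2.2.2.1

lemma crit_lt_one (hT : IsUnimodal T c) : c < 1 := hT.2.2.2.2.1

lemma strictMonoOn (hT : IsUnimodal T c) : StrictMonoOn T (Icc 0 c) := hT.2.2.2.2.2.1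

lemma strictAntiOn (hT : IsUnimodal T c) : StrictAntiOn T (Icc c 1) := hT.2.2.2.2.2.2

lemma crit_mem_Icc (hT : IsUnimodal T c) : c ∈ Icc (0 : ℝ) 1 := ⟨hT.crit_pos.le, hT.crit_lt_one.le⟩

lemma apply_crit_le_one (hT : IsUnimodal T c) : T c ≤ 1 := (hT.mapsTo hT.crit_mem_Icc).2

lemma apply_le_apply_crit (hT : IsUnimodal T c) {x : ℝ} (hx : x ∈ Icc (0 : ℝ) 1) : T x ≤ T c := by
  rcases le_total x c with h | h
  · exact hT.strictMonoOn.monotoneOn ⟨hx.1, h⟩ ⟨hT.crit_pos.le, le_rfl⟩ h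
  · exact hT.strictAntiOn.antitoneOn ⟨le_rfl, hT.crit_lt_one.le⟩ ⟨h, hx.2⟩ h

end IsUnimodal

/-! ### Linear lap growth forces zero entropy -/

section Cover

open Dynamics Asymptotics

lemma exists_isDynCoverOf_of_code {X ι : Type*} {T : X → X} {F : Set X} {U : SetRel X X}
    {n : ℕ} (f : X → ι) (t : Finset ι) (hf : MapsTo f F t)
    (h : ∀ x ∈ F, ∀ y ∈ F, f x = f y → (x, y) ∈ dynEntourage T U n) :
    ∃ s : Finset X, IsDynCoverOf T F U n s ∧ s.card ≤ t.card := by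
  obtain ⟨s, hsF, hs⟩ := exists_subset_bijOn F f
  have hfin : s.Finite := t.finite_toSet.of_injOn (fun x hx => hf (hsF hx)) hs.injOn
  refine ⟨hfin.toFinset, fun x hx => ?_, ?_⟩
  · obtain ⟨y, hy, hyx⟩ := hs.surjOn (mem_image_of_mem f hx)
    exact ⟨y, by simpa using hy, h x hx y (hsF hy) hyx.symm⟩
  · exact Finset.card_le_card_of_injOn f (fun x hx => hf (hsF (by simpa using hx)))
      (by simpa using hs.injOn)

lemma coverEntropy_nonpos_of_card_le_pow {X ι : Type*} [UniformSpace X] {p : ι → Prop}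
    {U : ι → SetRel X X} (hU : (uniformity X).HasBasis p U) {T : X → X} {F : Set X}
    (h : ∀ i, p i → ∃ (C : ℝ) (d : ℕ), ∀ n, ∃ s : Finset X,
      IsDynCoverOf T F (U i) n s ∧ (s.card : ℝ) ≤ C * (n + 1 : ℝ) ^ d) :
    coverEntropy T F ≤ 0 := by
  rw [coverEntropy_eq_iSup_basis hU]
  refine iSup₂_le fun i hi => ?_
  rw [coverEntropyEntourage, ← EReal.le_of_forall_lt_iff_le]
  intro a ha
  obtain ⟨C, d, hs⟩ := h i hi
  refine Eventually.expGrowthSup_le ?_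
  have hlim : (fun n : ℕ => C * ((n : ℝ) + 1) ^ d) =o[atTop] fun n : ℕ => Real.exp (a * n) := by
    have hshift : Tendsto (fun n : ℕ => (n : ℝ) + 1) atTop atTop :=
      tendsto_atTop_add_const_right _ _ tendsto_natCast_atTop_atTop
    have hpow := (isLittleO_pow_exp_pos_mul_atTop d (EReal.coe_pos.1 ha)).comp_tendsto hshift
    refine (hpow.const_mul_left C).trans_isBigO ?_
    refine IsBigO.of_bound (Real.exp a) (Eventually.of_forall fun n => ?_)
    rw [Real.norm_eq_abs, Real.norm_eq_abs, Function.comp_apply, Real.abs_exp, Real.abs_exp,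
      ← Real.exp_add]
    exact (congrArg Real.exp (by ring)).le
  filter_upwards [hlim.bound one_pos] with n hn
  obtain ⟨s, hcov, hcard⟩ := hs n
  have hexp : (s.card : ℝ) ≤ Real.exp (a * n) := by
    rw [one_mul, Real.norm_eq_abs, Real.norm_eq_abs, Real.abs_exp] at hn
    exact hcard.trans ((le_abs_self _).trans hn)
  calc ((coverMincard T F (U i) n : ℕ∞) : ENNReal)
      ≤ ((s.card : ℕ∞) : ENNReal) := by exact_mod_cast hcov.coverMincard_le_card
    _ = ENNReal.ofReal s.card := by simp
    _ ≤ ENNReal.ofReal (Real.exp (a * n)) := ENNReal.ofReal_le_ofReal hexp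
    _ = EReal.exp ((a : EReal) * (n : EReal)) := by rw [← EReal.exp_coe]; norm_cast

end Cover

section Laps

open Dynamics

variable {T : ℝ → ℝ} {n L L' : ℕ} {S J J' : Set ℝ}

/-- All iterates `T^[k]` with `k < n` are monotone on `S`, in either direction; maximal such
intervals are the laps of the iterates. -/
def IsLap (T : ℝ → ℝ) (n : ℕ) (S : Set ℝ) : Prop :=
  ∀ k < n, MonotoneOn T^[k] S ∨ AntitoneOn T^[k] S

/-- `J` is covered by at most `L` sets on which the first `n` iterates are monotone. -/
def HasLaps (T : ℝ → ℝ) (n : ℕ) (J : Set ℝ) (L : ℕ) : Prop :=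
  ∃ P : Finset (Set ℝ), P.card ≤ L ∧ J ⊆ ⋃₀ P ∧ ∀ S ∈ P, IsLap T n S

lemma isLap_zero (T : ℝ → ℝ) (S : Set ℝ) : IsLap T 0 S := fun k hk => absurd hk k.not_lt_zero

lemma IsLap.hasLaps (h : IsLap T n J) : HasLaps T n J 1 :=
  ⟨{J}, by simp, by simp, by simpa using h⟩

lemma HasLaps.union (h : HasLaps T n J L) (h' : HasLaps T n J' L') :
    HasLaps T n (J ∪ J') (L + L') := by
  classical
  obtain ⟨P, hcard, hcov, hlap⟩ := h
  obtain ⟨P', hcard', hcov', hlap'⟩ := h'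
  refine ⟨P ∪ P', (Finset.card_union_le _ _).trans (add_le_add hcard hcard'), ?_, fun S hS => ?_⟩
  · rw [Finset.coe_union, sUnion_union]
    exact union_subset_union hcov hcov'
  · exact (Finset.mem_union.1 hS).elim (hlap S) (hlap' S)

lemma IsLap.inter_preimage (h : IsLap T n S) (hT : MonotoneOn T J ∨ AntitoneOn T J) :
    IsLap T (n + 1) (J ∩ T ⁻¹' S) := by
  rintro (_ | k) hk
  · exact Or.inl monotoneOn_id
  rw [Function.iterate_succ]
  have hm : MapsTo T (J ∩ T ⁻¹' S) S := fun x hx => hx.2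
  have hJ : J ∩ T ⁻¹' S ⊆ J := inter_subset_left
  rcases h k (by omega) with hk | hk <;> rcases hT with hT | hT
  · exact Or.inl (hk.comp (hT.mono hJ) hm)
  · exact Or.inr fun x hx y hy hxy => hk (hm hy) (hm hx) (hT hx.1 hy.1 hxy)
  · exact Or.inr fun x hx y hy hxy => hk (hm hx) (hm hy) (hT hx.1 hy.1 hxy)
  · exact Or.inl (hk.comp (hT.mono hJ) hm)

lemma HasLaps.of_mapsTo (h : HasLaps T n J' L) (hT : MonotoneOn T J ∨ AntitoneOn T J)
    (hm : MapsTo T J J') : HasLaps T (n + 1) J L := by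
  classical
  obtain ⟨P, hcard, hcov, hlap⟩ := h
  refine ⟨P.image fun S => J ∩ T ⁻¹' S, Finset.card_image_le.trans hcard, fun x hx => ?_, ?_⟩
  · obtain ⟨S, hS, hxS⟩ := hcov (hm hx)
    exact ⟨_, Finset.mem_coe.2 (Finset.mem_image_of_mem _ hS), hx, hxS⟩
  · intro S' hS'
    obtain ⟨S, hS, rfl⟩ := Finset.mem_image.1 hS'
    exact (hlap S hS).inter_preimage hT

lemma isLap_of_mapsTo_self (hT : MonotoneOn T J ∨ AntitoneOn T J) (hm : MapsTo T J J) (n : ℕ) :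
    IsLap T n J := by
  induction n with
  | zero => exact isLap_zero T J
  | succ n ih =>
    have := ih.inter_preimage hT
    rwa [inter_eq_left.2 (show J ⊆ T ⁻¹' J from hm)] at this

lemma isLap_of_subsingleton (hS : S.Subsingleton) (n : ℕ) : IsLap T n S :=
  fun _ _ => Or.inl (hS.monotoneOn _)

open Classical in
/-- The sign `±1` by which `T^[k]` must be multiplied to become increasing on a lap `S`. -/
noncomputable def lapSign (T : ℝ → ℝ) (S : Set ℝ) (k : ℕ) : ℤ :=
  if MonotoneOn T^[k] S then 1 else -1

/-- The signed sum of the first `n` iterates, rounded down to multiples of `1 / K`. On a lap every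
summand is increasing, so equality of codes forces equality of all the rounded iterates. -/
noncomputable def lapCode (T : ℝ → ℝ) (S : Set ℝ) (n K : ℕ) (x : ℝ) : ℤ :=
  ∑ k ∈ Finset.range n, lapSign T S k * ⌊K * T^[k] x⌋

lemma abs_lapSign (T : ℝ → ℝ) (S : Set ℝ) (k : ℕ) : |lapSign T S k| = 1 := by
  unfold lapSign; split_ifs <;> simp

lemma lapSign_ne_zero (T : ℝ → ℝ) (S : Set ℝ) (k : ℕ) : lapSign T S k ≠ 0 := by
  unfold lapSign; split_ifs <;> simp

lemma abs_lapCode_le (hm : MapsTo T (Icc 0 1) (Icc 0 1)) (S : Set ℝ) (n K : ℕ) {x : ℝ}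
    (hx : x ∈ Icc (0 : ℝ) 1) : |lapCode T S n K x| ≤ n * K := by
  refine (Finset.abs_sum_le_sum_abs _ _).trans ?_
  refine (Finset.sum_le_card_nsmul _ _ (K : ℤ) fun k _ => ?_).trans (by simp)
  obtain ⟨h0, h1⟩ := hm.iterate k hx
  rw [abs_mul, abs_lapSign, one_mul, abs_of_nonneg (Int.floor_nonneg.2 (by positivity))]
  exact_mod_cast (Int.floor_le _).trans (mul_le_of_le_one_right K.cast_nonneg h1)

lemma IsLap.floor_eq_of_lapCode_eq (h : IsLap T n S) {K : ℕ} {x y : ℝ} (hx : x ∈ S) (hy : y ∈ S)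
    (hxy : lapCode T S n K x = lapCode T S n K y) {k : ℕ} (hk : k < n) :
    ⌊K * T^[k] x⌋ = ⌊K * T^[k] y⌋ := by
  wlog hle : x ≤ y generalizing x y
  · exact (this hy hx hxy.symm (le_of_not_ge hle)).symm
  have hterm : ∀ k ∈ Finset.range n,
      lapSign T S k * ⌊K * T^[k] x⌋ ≤ lapSign T S k * ⌊K * T^[k] y⌋ := by
    intro k hk
    unfold lapSign
    split_ifs with hmono
    · have := hmono hx hy hle
      rw [one_mul, one_mul]
      gcongr
    · have := (h k (Finset.mem_range.1 hk)).resolve_left hmono hx hy hle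
      rw [neg_one_mul, neg_one_mul, neg_le_neg_iff]
      gcongr
  exact mul_left_cancel₀ (lapSign_ne_zero T S k)
    ((Finset.sum_eq_sum_iff_of_le hterm).1 hxy k (Finset.mem_range.2 hk))

lemma IsLap.exists_isDynCoverOf (h : IsLap T n S) (hm : MapsTo T (Icc 0 1) (Icc 0 1)) {K : ℕ}
    (hK : 0 < K) :
    ∃ s : Finset ℝ, IsDynCoverOf T (Icc 0 1 ∩ S) {p | dist p.1 p.2 ≤ 1 / (K : ℝ)} n s ∧
      s.card ≤ 2 * (n * K) + 1 := by
  have hcode : MapsTo (lapCode T S n K) (Icc 0 1 ∩ S) (Finset.Icc (-(n * K : ℤ)) (n * K)) :=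
    fun x hx => Finset.mem_coe.2 (Finset.mem_Icc.2 (abs_le.1 (abs_lapCode_le hm S n K hx.1)))
  have hclose : ∀ x ∈ Icc 0 1 ∩ S, ∀ y ∈ Icc 0 1 ∩ S, lapCode T S n K x = lapCode T S n K y →
      (x, y) ∈ dynEntourage T {p | dist p.1 p.2 ≤ 1 / (K : ℝ)} n := by
    intro x hx y hy hxy
    rw [mem_dynEntourage]
    intro k hk
    have hlt := Int.abs_sub_lt_one_of_floor_eq_floor (h.floor_eq_of_lapCode_eq hx.2 hy.2 hxy hk)
    rw [← mul_sub, abs_mul, Nat.abs_cast] at hlt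
    rw [mem_ofPred_eq, Real.dist_eq, le_div_iff₀' (by exact_mod_cast hK)]
    exact hlt.le
  obtain ⟨s, hs, hcard⟩ := exists_isDynCoverOf_of_code _ _ hcode hclose
  refine ⟨s, hs, hcard.trans ?_⟩
  rw [Int.card_Icc, Int.toNat_le]
  push_cast
  linarith

lemma HasLaps.exists_isDynCoverOf (h : HasLaps T n (Icc 0 1) L) (hm : MapsTo T (Icc 0 1) (Icc 0 1))
    {K : ℕ} (hK : 0 < K) :
    ∃ s : Finset ℝ, IsDynCoverOf T (Icc 0 1) {p | dist p.1 p.2 ≤ 1 / (K : ℝ)} n s ∧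
      s.card ≤ L * (2 * (n * K) + 1) := by
  classical
  obtain ⟨P, hcard, hcov, hlap⟩ := h
  choose! s hs hs' using fun S hS => (hlap S hS).exists_isDynCoverOf hm hK
  refine ⟨P.biUnion s, fun x hx => ?_, ?_⟩
  · obtain ⟨S, hS, hxS⟩ := hcov hx
    obtain ⟨y, hy, hxy⟩ := hs S hS ⟨hx, hxS⟩
    exact ⟨y, Finset.mem_coe.2 (Finset.mem_biUnion.2 ⟨S, hS, hy⟩), hxy⟩
  · exact (Finset.card_biUnion_le_card_mul _ _ _ hs').trans (Nat.mul_le_mul_right _ hcard)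

lemma coverEntropy_nonpos_of_hasLaps (hm : MapsTo T (Icc 0 1) (Icc 0 1))
    (h : ∀ n, HasLaps T n (Icc 0 1) (2 * n + 2)) : coverEntropy T (Icc 0 1) ≤ 0 := by
  have hbasis : (uniformity ℝ).HasBasis (fun K : ℕ => 0 < K)
      (fun K : ℕ => {p : ℝ × ℝ | dist p.1 p.2 ≤ 1 / (K : ℝ)}) := by
    refine Metric.mk_uniformity_basis_le (fun K hK => by positivity) fun ε hε => ?_
    obtain ⟨n, hn⟩ := exists_nat_one_div_lt hε
    exact ⟨n + 1, n.succ_pos, by push_cast; exact hn.le⟩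
  refine coverEntropy_nonpos_of_card_le_pow hbasis fun K hK =>
    ⟨2 * (2 * K + 1), 2, fun n => ?_⟩
  obtain ⟨s, hs, hcard⟩ := (h n).exists_isDynCoverOf hm hK
  refine ⟨s, hs, ?_⟩
  calc (s.card : ℝ) ≤ (2 * n + 2) * (2 * (n * K) + 1) := by exact_mod_cast hcard
    _ ≤ 2 * (2 * K + 1) * (n + 1 : ℝ) ^ 2 := by
      have : (0 : ℝ) ≤ (2 * n + 2) * (n + 2 * K) := by positivity
      linarith

/-- If the critical orbit does not turn back across `c`, then `[c, T c]` is degenerate or is mapped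
into itself monotonically, so each iterate adds at most two laps. -/
lemma IsUnimodal.hasLaps {c : ℝ} (hT : IsUnimodal T c) (h : c < T c → c ≤ T (T c)) (n : ℕ) :
    HasLaps T n (Icc 0 1) (2 * n + 2) := by
  have hmem := hT.crit_mem_Icc
  have hleft : MonotoneOn T (Icc 0 c) ∨ AntitoneOn T (Icc 0 c) := Or.inl hT.strictMonoOn.monotoneOn
  have hright : MonotoneOn T (Icc c 1) ∨ AntitoneOn T (Icc c 1) :=
    Or.inr hT.strictAntiOn.antitoneOn
  have hunion : Icc (0 : ℝ) 1 = Icc 0 c ∪ Icc c 1 := (Icc_union_Icc_eq_Icc hmem.1 hmem.2).symm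
  have hcore (n : ℕ) : IsLap T n (Icc c (T c)) := by
    rcases lt_or_ge c (T c) with hc | hc
    · have hanti := hT.strictAntiOn.antitoneOn.mono (Icc_subset_Icc_right hT.apply_crit_le_one)
      refine isLap_of_mapsTo_self (Or.inr hanti) (fun x hx => ⟨?_, ?_⟩) n
      · exact (h hc).trans (hanti hx ⟨hc.le, le_rfl⟩ hx.2)
      · exact hT.apply_le_apply_crit ⟨hmem.1.trans hx.1, hx.2.trans hT.apply_crit_le_one⟩
    · exact isLap_of_subsingleton (subsingleton_Icc_of_ge hc) n
  have hmaps : MapsTo T (Icc 0 1) (Icc 0 c ∪ Icc c (T c)) := fun x hx =>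
    (le_total (T x) c).imp (fun hle => ⟨(hT.mapsTo hx).1, hle⟩)
      (fun hge => ⟨hge, hT.apply_le_apply_crit hx⟩)
  rw [hunion] at hmaps ⊢
  have hpieces (n : ℕ) : HasLaps T n (Icc 0 c) (n + 1) ∧ HasLaps T n (Icc c 1) (n + 1) := by
    induction n with
    | zero => exact ⟨(isLap_zero T _).hasLaps, (isLap_zero T _).hasLaps⟩
    | succ n ih =>
      have hstep := ih.1.union (hcore n).hasLaps
      exact ⟨hstep.of_mapsTo hleft (hmaps.mono_left subset_union_left),
        hstep.of_mapsTo hright (hmaps.mono_left subset_union_right)⟩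
  have := (hpieces n).1.union (hpieces n).2
  rwa [show 2 * n + 2 = n + 1 + (n + 1) by ring]

end Laps

lemma IsUnimodal.crit_turns_back_of_coverEntropy_pos {T : ℝ → ℝ} {c : ℝ} (hT : IsUnimodal T c)
    (hent : 0 < Dynamics.coverEntropy T (Icc 0 1)) : c < T c ∧ T (T c) < c := by
  by_contra! hcon
  exact hent.not_ge (coverEntropy_nonpos_of_hasLaps hT.mapsTo (hT.hasLaps hcon))

/-! ### Coordinates on the inverse limit -/

namespace InvLimit

variable {T : ℝ → ℝ} {c : ℝ}

lemma coord_mem_Icc (x : InvLimit T) (n : ℕ) : x.1 n ∈ Icc (0 : ℝ) 1 := x.2.1 n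

lemma coord_nonneg (x : InvLimit T) (n : ℕ) : 0 ≤ x.1 n := (x.2.1 n).1

lemma apply_coord_succ (x : InvLimit T) (n : ℕ) : T (x.1 (n + 1)) = x.1 n := x.2.2 n

lemma iterate_coord_add (x : InvLimit T) (n k : ℕ) : T^[k] (x.1 (n + k)) = x.1 n := by
  induction k with
  | zero => rfl
  | succ k ih => rw [Function.iterate_succ_apply, ← add_assoc, apply_coord_succ x, ih]

lemma coord_le_apply_crit (hT : IsUnimodal T c) (x : InvLimit T) (n : ℕ) : x.1 n ≤ T c := by
  rw [← apply_coord_succ x n]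
  exact hT.apply_le_apply_crit (coord_mem_Icc x _)

lemma continuous_coord_s1 (n : ℕ) : Continuous fun x : InvLimit T => x.1 n :=
  (continuous_apply n).comp continuous_subtype_val

lemma ext_of_coord_add {x y : InvLimit T} (n : ℕ) (h : ∀ k, x.1 (n + k) = y.1 (n + k)) : x = y := by
  ext m
  rw [← iterate_coord_add x m n, ← iterate_coord_add y m n, add_comm, h]

lemma ext_of_branches (hT : IsUnimodal T c) {x y : InvLimit T} {n : ℕ} (h : x.1 n = y.1 n)
    (hb : ∀ m > n, x.1 m ≤ c ∧ y.1 m ≤ c ∨ c ≤ x.1 m ∧ c ≤ y.1 m) : x = y := by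
  refine ext_of_coord_add n fun k => ?_
  induction k with
  | zero => exact h
  | succ k ih =>
    rw [← apply_coord_succ x, ← apply_coord_succ y] at ih
    rcases hb (n + k + 1) (by omega) with ⟨hx, hy⟩ | ⟨hx, hy⟩
    · exact hT.strictMonoOn.injOn ⟨coord_nonneg x _, hx⟩ ⟨coord_nonneg y _, hy⟩ ih
    · exact hT.strictAntiOn.injOn ⟨hx, (coord_mem_Icc x _).2⟩ ⟨hy, (coord_mem_Icc y _).2⟩ ih

lemma exists_coord_add_eq (hm : MapsTo T (Icc 0 1) (Icc 0 1)) {w : ℕ → ℝ}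
    (hw : ∀ k, w k ∈ Icc (0 : ℝ) 1) (hTw : ∀ k, T (w (k + 1)) = w k) (n : ℕ) :
    ∃ x : InvLimit T, ∀ k, x.1 (n + k) = w k := by
  refine ⟨⟨fun m => T^[n] (w m), fun m => hm.iterate n (hw m), fun m => ?_⟩, fun k => ?_⟩
  · rw [← Function.iterate_succ_apply' T, Function.iterate_succ_apply, hTw]
  · change T^[n] (w (n + k)) = w k
    induction n with
    | zero => rw [zero_add, Function.iterate_zero_apply]
    | succ n ih => rw [Function.iterate_succ_apply, add_right_comm, hTw, ih]

end InvLimit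

open InvLimit

lemma isClosed_invLimitSet {T : ℝ → ℝ} (hT : ContinuousOn T (Icc 0 1)) :
    IsClosed (invLimitSet T) := by
  have hcube : IsClosed {x : ℕ → ℝ | ∀ n, x n ∈ Icc (0 : ℝ) 1} := by
    simp only [ofPred_forall]
    exact isClosed_iInter fun n => isClosed_Icc.preimage (continuous_apply n)
  have heq : invLimitSet T = ⋂ n, {x : ℕ → ℝ | ∀ n, x n ∈ Icc (0 : ℝ) 1} ∩
      (fun x => T (x (n + 1)) - x n) ⁻¹' {0} := by
    ext x
    simp only [invLimitSet, mem_ofPred_eq, mem_iInter, mem_inter_iff, mem_preimage,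
      mem_singleton_iff, sub_eq_zero, forall_and, forall_const]
  rw [heq]
  refine isClosed_iInter fun n => ContinuousOn.preimage_isClosed_of_isClosed ?_ hcube
    isClosed_singleton
  have hmaps : MapsTo (fun x : ℕ → ℝ => x (n + 1)) {x | ∀ n, x n ∈ Icc (0 : ℝ) 1} (Icc 0 1) :=
    fun _ hx => hx (n + 1)
  exact (hT.comp (continuous_apply (n + 1)).continuousOn hmaps).sub
    (continuous_apply n).continuousOn

lemma compactSpace_invLimit {T : ℝ → ℝ} (hT : ContinuousOn T (Icc 0 1)) :
    CompactSpace (InvLimit T) :=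
  isCompact_iff_compactSpace.1 <| (isCompact_univ_pi fun _ : ℕ => isCompact_Icc).of_isClosed_subset
    (isClosed_invLimitSet hT) fun _ hx n _ => hx.1 n

/-! ### The ray through the fixed point `0` -/

/-- A unimodal map whose critical point lies in the interior of its core `[T (T c), T c]`. -/
structure HasProperCore (T : ℝ → ℝ) (c : ℝ) : Prop where
  unimodal : IsUnimodal T c
  lt_apply_crit : c < T c
  apply_apply_crit_lt : T (T c) < c

/-- The point `(…, 0, 0)` of the inverse limit. -/
def zeroPoint (T : ℝ → ℝ) (h : T 0 = 0) : InvLimit T :=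
  ⟨fun _ => 0, fun _ => ⟨le_rfl, zero_le_one⟩, fun _ => h⟩

/-- The points all of whose coordinates of index greater than `n` lie on the increasing branch.
These arcs increase with `n` to a ray starting at `(…, 0, 0)`, parametrized by the `n`-th
coordinate. -/
def rayArc (T : ℝ → ℝ) (c : ℝ) (n : ℕ) : Set (InvLimit T) := {x | ∀ m > n, x.1 m ≤ c}

/-- The points whose coordinates from index `n` on are at least `p` and for `m > n` lie left of `c`
if `m ∈ s` and right of `c` otherwise: the arc with left itinerary `s`. -/
def branchSet (T : ℝ → ℝ) (c p : ℝ) (s : Set ℕ) (n : ℕ) : Set (InvLimit T) :=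
  {x | (∀ m ≥ n, p ≤ x.1 m) ∧ ∀ m > n, (m ∈ s → x.1 m ≤ c) ∧ (m ∉ s → c ≤ x.1 m)}

/-- `x` is an interior point of an arc in `A`. -/
def IsArcInterior {A : Type*} [TopologicalSpace A] (x : A) : Prop :=
  ∃ γ : ℝ → A, Continuous γ ∧ InjOn γ (Icc (-1) 1) ∧ γ 0 = x

lemma IsArcInterior.map {A B : Type*} [TopologicalSpace A] [TopologicalSpace B] {x : A}
    (h : IsArcInterior x) {φ : A → B} (hφ : Continuous φ) (hinj : Function.Injective φ) :
    IsArcInterior (φ x) := by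
  obtain ⟨γ, hγ, hγinj, hγ0⟩ := h
  exact ⟨φ ∘ γ, hφ.comp hγ, hinj.injOn.comp hγinj (mapsTo_univ _ _), congrArg φ hγ0⟩

lemma isArcInterior_of_section {A : Type*} [TopologicalSpace A] {π : A → ℝ} {b : ℝ → A} {p q : ℝ}
    {x : A} (hb : Continuous b) (hπ : ∀ v ∈ Icc p q, π (b v) = v) (hx : b (π x) = x)
    (hp : p < π x) (hq : π x < q) : IsArcInterior x := by
  obtain ⟨δ, hδ, hball⟩ := Metric.nhds_basis_closedBall.mem_iff.1 (Icc_mem_nhds hp hq)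
  rw [Real.closedBall_eq_Icc] at hball
  refine ⟨fun t => b (π x + δ * t), hb.comp (by fun_prop), fun s hs t ht hst => ?_, by simpa⟩
  have hmem : ∀ t ∈ Icc (-1 : ℝ) 1, π x + δ * t ∈ Icc p q := fun t ht =>
    hball ⟨by nlinarith [ht.1], by nlinarith [ht.2]⟩
  have hπst := congrArg π hst
  rw [hπ _ (hmem s hs), hπ _ (hmem t ht)] at hπst
  exact mul_left_cancel₀ hδ.ne' (add_left_cancel hπst)

lemma IsUnimodal.eq_of_mem_branchSet {T : ℝ → ℝ} {c : ℝ} (hT : IsUnimodal T c) {p : ℝ}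
    {s : Set ℕ} {n : ℕ} {x y : InvLimit T} (hx : x ∈ branchSet T c p s n)
    (hy : y ∈ branchSet T c p s n) (h : x.1 n = y.1 n) : x = y :=
  ext_of_branches hT h fun m hm => by
    by_cases hs : m ∈ s
    · exact Or.inl ⟨(hx.2 m hm).1 hs, (hy.2 m hm).1 hs⟩
    · exact Or.inr ⟨(hx.2 m hm).2 hs, (hy.2 m hm).2 hs⟩

lemma isClosed_branchSet (T : ℝ → ℝ) (c p : ℝ) (s : Set ℕ) (n : ℕ) :
    IsClosed (branchSet T c p s n) := by
  simp only [branchSet, ofPred_and, ofPred_forall]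
  refine IsClosed.inter ?_ (isClosed_iInter fun m => isClosed_iInter fun _ => IsClosed.inter ?_ ?_)
  · exact isClosed_iInter fun m => isClosed_iInter fun _ =>
      isClosed_le continuous_const (continuous_coord_s1 m)
  · exact isClosed_iInter fun _ => isClosed_le (continuous_coord_s1 m) continuous_const
  · exact isClosed_iInter fun _ => isClosed_le continuous_const (continuous_coord_s1 m)

namespace HasProperCore

variable {T : ℝ → ℝ} {c : ℝ}

lemma apply_crit_pos (H : HasProperCore T c) : 0 < T c := H.unimodal.crit_pos.trans H.lt_apply_crit

lemma coord_mem_Icc (H : HasProperCore T c) (x : InvLimit T) (n : ℕ) : x.1 n ∈ Icc 0 (T c) :=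
  ⟨coord_nonneg x n, coord_le_apply_crit H.unimodal x n⟩

lemma exists_preimage_on_branch (H : HasProperCore T c) {p : ℝ} (hp : p ∈ Icc 0 c) (hTp : T p = p)
    {s : Set ℕ} (hs : ∀ m ∉ s, T (T c) ≤ p) (m : ℕ) {v : ℝ} (hv : v ∈ Icc p (T c)) :
    ∃ u ∈ Icc p (T c), T u = v ∧ (m ∈ s → u ≤ c) ∧ (m ∉ s → c ≤ u) := by
  have hT := H.unimodal
  by_cases hm : m ∈ s
  · have hcont : ContinuousOn T (Icc p c) :=
      hT.continuousOn.mono (Icc_subset_Icc hp.1 hT.crit_lt_one.le)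
    obtain ⟨u, hu, huv⟩ := intermediate_value_Icc hp.2 hcont (show v ∈ Icc (T p) (T c) by rwa [hTp])
    exact ⟨u, ⟨hu.1, hu.2.trans H.lt_apply_crit.le⟩, huv, fun _ => hu.2, fun h => absurd hm h⟩
  · have hcont : ContinuousOn T (Icc c (T c)) :=
      hT.continuousOn.mono (Icc_subset_Icc hT.crit_pos.le hT.apply_crit_le_one)
    obtain ⟨u, hu, huv⟩ := intermediate_value_Icc' H.lt_apply_crit.le hcont
      (show v ∈ Icc (T (T c)) (T c) from ⟨(hs m hm).trans hv.1, hv.2⟩)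
    exact ⟨u, ⟨hp.2.trans hu.1, hu.2⟩, huv, fun h => absurd h hm, fun _ => hu.1⟩

lemma exists_mem_branchSet (H : HasProperCore T c) {p : ℝ} (hp : p ∈ Icc 0 c) (hTp : T p = p)
    {s : Set ℕ} (hs : ∀ m ∉ s, T (T c) ≤ p) (n : ℕ) {v : ℝ} (hv : v ∈ Icc p (T c)) :
    ∃ x ∈ branchSet T c p s n, x.1 n = v := by
  choose! br hbrI hbrT hbrs using fun m v => H.exists_preimage_on_branch hp hTp hs m (v := v)
  let w : ℕ → ℝ := fun k => Nat.rec v (fun j u => br (n + j + 1) u) k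
  have hwI : ∀ k, w k ∈ Icc p (T c) := fun k =>
    Nat.rec hv (fun j ih => hbrI (n + j + 1) _ ih) k
  have hw01 : ∀ k, w k ∈ Icc (0 : ℝ) 1 := fun k =>
    ⟨hp.1.trans (hwI k).1, (hwI k).2.trans H.unimodal.apply_crit_le_one⟩
  obtain ⟨x, hx⟩ := exists_coord_add_eq H.unimodal.mapsTo hw01
    (fun k => hbrT (n + k + 1) _ (hwI k)) n
  refine ⟨x, ⟨fun m hm => ?_, fun m hm => ?_⟩, hx 0⟩
  · obtain ⟨k, rfl⟩ := Nat.exists_eq_add_of_le hm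
    exact hx k ▸ (hwI k).1
  · obtain ⟨k, rfl⟩ := Nat.exists_eq_add_of_lt hm
    rw [add_assoc, hx (k + 1), ← add_assoc]
    exact hbrs (n + k + 1) _ (hwI k)

lemma exists_branchSet_section (H : HasProperCore T c) {p : ℝ} (hp : p ∈ Icc 0 c) (hTp : T p = p)
    {s : Set ℕ} (hs : ∀ m ∉ s, T (T c) ≤ p) (n : ℕ) :
    ∃ b : ℝ → InvLimit T, Continuous b ∧
      (∀ v ∈ Icc p (T c), b v ∈ branchSet T c p s n ∧ (b v).1 n = v) ∧
      ∀ x ∈ branchSet T c p s n, b (x.1 n) = x := by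
  have := compactSpace_invLimit H.unimodal.continuousOn
  have : CompactSpace (branchSet T c p s n) :=
    isCompact_iff_compactSpace.1 (isClosed_branchSet T c p s n).isCompact
  have hpc : p ≤ T c := hp.2.trans H.lt_apply_crit.le
  have hcoord : ∀ x ∈ branchSet T c p s n, x.1 n ∈ Icc p (T c) := fun x hx =>
    ⟨hx.1 n le_rfl, (H.coord_mem_Icc x n).2⟩
  let f : branchSet T c p s n → Icc p (T c) := fun x => ⟨x.1.1 n, hcoord x.1 x.2⟩
  have hf : f.Bijective := by
    refine ⟨fun x y hxy => Subtype.ext ?_, fun v => ?_⟩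
    · exact H.unimodal.eq_of_mem_branchSet x.2 y.2 (congrArg Subtype.val hxy)
    · obtain ⟨x, hx, hxv⟩ := H.exists_mem_branchSet hp hTp hs n v.2
      exact ⟨⟨x, hx⟩, Subtype.ext hxv⟩
  have hfc : Continuous f := ((continuous_coord_s1 n).comp continuous_subtype_val).subtype_mk _
  let e : branchSet T c p s n ≃ₜ Icc p (T c) :=
    Continuous.homeoOfEquivCompactToT2 (f := Equiv.ofBijective f hf) hfc
  refine ⟨fun v => (e.symm (projIcc p (T c) hpc v)).1,
    continuous_subtype_val.comp (e.symm.continuous.comp continuous_projIcc), fun v hv => ?_,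
    fun x hx => ?_⟩
  · dsimp only
    rw [projIcc_of_mem hpc hv]
    exact ⟨(e.symm ⟨v, hv⟩).2, congrArg Subtype.val (e.apply_symm_apply ⟨v, hv⟩)⟩
  · dsimp only
    rw [projIcc_of_mem hpc (hcoord x hx)]
    exact congrArg Subtype.val (e.symm_apply_apply ⟨x, hx⟩)

lemma isArcInterior_of_mem_branchSet (H : HasProperCore T c) {p : ℝ} (hp : p ∈ Icc 0 c)
    (hTp : T p = p) {s : Set ℕ} (hs : ∀ m ∉ s, T (T c) ≤ p) {n : ℕ} {x : InvLimit T}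
    (hx : x ∈ branchSet T c p s n) (hpx : p < x.1 n) (hxc : x.1 n < T c) : IsArcInterior x := by
  obtain ⟨b, hb, hbv, hbx⟩ := H.exists_branchSet_section hp hTp hs n
  exact isArcInterior_of_section (π := fun x : InvLimit T => x.1 n) hb (fun v hv => (hbv v hv).2)
    (hbx x hx) hpx hxc

end HasProperCore

section RayArc

variable {T : ℝ → ℝ} {c : ℝ} {n : ℕ} {x y : InvLimit T}

lemma rayArc_mono (T : ℝ → ℝ) (c : ℝ) : Monotone (rayArc T c) :=
  fun _ _ hnm _ hx k hk => hx k (hnm.trans_lt hk)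

lemma rayArc_eq_branchSet (T : ℝ → ℝ) (c : ℝ) (n : ℕ) :
    rayArc T c n = branchSet T c 0 univ n := by
  ext x
  simp [rayArc, branchSet, coord_nonneg x]

lemma zeroPoint_mem_rayArc {h : T 0 = 0} (hc : 0 ≤ c) (n : ℕ) : zeroPoint T h ∈ rayArc T c n :=
  fun _ _ => hc

lemma IsUnimodal.eq_of_mem_rayArc (hT : IsUnimodal T c) (hx : x ∈ rayArc T c n)
    (hy : y ∈ rayArc T c n) (h : x.1 n = y.1 n) : x = y :=
  ext_of_branches hT h fun m hm => Or.inl ⟨hx m hm, hy m hm⟩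

lemma IsUnimodal.coord_lt_coord_iff_of_mem_rayArc (hT : IsUnimodal T c) (hx : x ∈ rayArc T c n)
    (hy : y ∈ rayArc T c n) (k : ℕ) : x.1 (n + k) < y.1 (n + k) ↔ x.1 n < y.1 n := by
  induction k with
  | zero => rfl
  | succ k ih =>
    rw [← ih, ← apply_coord_succ x (n + k), ← apply_coord_succ y (n + k)]
    exact (hT.strictMonoOn.lt_iff_lt ⟨coord_nonneg x _, hx _ (by omega)⟩
      ⟨coord_nonneg y _, hy _ (by omega)⟩).symm

lemma IsUnimodal.eq_crit_of_apply_eq (hT : IsUnimodal T c) {u : ℝ} (hu : u ∈ Icc (0 : ℝ) 1)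
    (h : T u = T c) : u = c := by
  rcases le_total u c with huc | huc
  · exact hT.strictMonoOn.injOn ⟨hu.1, huc⟩ ⟨hT.crit_pos.le, le_rfl⟩ h
  · exact hT.strictAntiOn.injOn ⟨huc, hu.2⟩ ⟨le_rfl, hT.crit_lt_one.le⟩ h

lemma IsUnimodal.coord_lt_of_mem_rayArc (hT : IsUnimodal T c) {u : ℝ} (hu : u ∈ Icc 0 c)
    (hTu : c < T u) (hx : x ∈ rayArc T c n) {m : ℕ} (hm : n + 2 ≤ m) : x.1 m < u := by
  obtain ⟨j, rfl⟩ : ∃ j, m = j + 1 := ⟨m - 1, by omega⟩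
  by_contra! hlt
  have hle : T u ≤ x.1 j := by
    rw [← apply_coord_succ x j]
    exact hT.strictMonoOn.monotoneOn hu ⟨coord_nonneg x _, hx _ (by omega)⟩ hlt
  exact (hTu.trans_le hle).not_ge (hx j (by omega))

end RayArc

lemma apply_eq_self_of_tendsto_of_two_periodic {T : ℝ → ℝ} {u : ℝ} (hu : T (T u) = u)
    {z : ℕ → InvLimit T} {a : InvLimit T} (hz : Tendsto z atTop (𝓝 a)) {m : ℕ}
    (h : ∀ j, (z j).1 (m + j) = u) : T u = u := by
  have hcoord : ∀ j, (z j).1 m = T^[j] u := fun j => by rw [← iterate_coord_add (z j) m j, h]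
  have hlim : Tendsto (fun j => T^[j] u) atTop (𝓝 (a.1 m)) :=
    (((continuous_coord_s1 m).tendsto a).comp hz).congr hcoord
  have heven : ∀ j, T^[2 * j] u = u := fun j => by
    rw [Function.iterate_mul]
    exact Function.iterate_fixed hu j
  have hodd : ∀ j, T^[2 * j + 1] u = T u := fun j => by
    rw [Function.iterate_succ_apply', heven]
  have htwo : Tendsto (fun j : ℕ => 2 * j) atTop atTop := tendsto_id.const_mul_atTop' two_pos
  have h₀ := tendsto_nhds_unique ((hlim.comp htwo).congr heven) tendsto_const_nhds
  have h₁ := tendsto_nhds_unique ((hlim.comp ((tendsto_add_atTop_nat 1).comp htwo)).congr hodd)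
    tendsto_const_nhds
  rw [← h₁, h₀]

namespace HasProperCore

variable {T : ℝ → ℝ} {c : ℝ}

lemma exists_two_periodic (H : HasProperCore T c) : ∃ u ∈ Ioo 0 c, c < T u ∧ T (T u) = u := by
  have hT := H.unimodal
  have hcont : ContinuousOn T (Icc 0 c) :=
    hT.continuousOn.mono (Icc_subset_Icc le_rfl hT.crit_lt_one.le)
  have hcont_sub : ContinuousOn (fun v => T v - v) (Icc c (T c)) :=
    (hT.continuousOn.mono (Icc_subset_Icc hT.crit_pos.le hT.apply_crit_le_one)).sub continuousOn_id
  obtain ⟨q, hq, hTq⟩ : ∃ q ∈ Ioo c (T c), T q - q = 0 :=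
    intermediate_value_Ioo' H.lt_apply_crit.le hcont_sub
      ⟨by linarith [H.lt_apply_crit, H.apply_apply_crit_lt], by linarith [H.lt_apply_crit]⟩
  rw [sub_eq_zero] at hTq
  obtain ⟨r, hr, hTr⟩ : ∃ r ∈ Ioo 0 c, T r = q :=
    intermediate_value_Ioo hT.crit_pos.le hcont
      ⟨by linarith [hT.apply_zero, hT.crit_pos, hq.1], hq.2⟩
  have hcomp : ContinuousOn (fun v => T (T v) - v) (Icc r c) :=
    (hT.continuousOn.comp (hcont.mono (Icc_subset_Icc hr.1.le le_rfl)) fun v hv =>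
      hT.mapsTo ⟨hr.1.le.trans hv.1, hv.2.trans hT.crit_lt_one.le⟩).sub continuousOn_id
  obtain ⟨u, hu, hTu⟩ : ∃ u ∈ Ioo r c, T (T u) - u = 0 :=
    intermediate_value_Ioo' hr.2.le hcomp
      ⟨by linarith [H.apply_apply_crit_lt], by rw [hTr, hTq]; linarith [hq.1, hr.2]⟩
  have hqu : q ≤ T u := by
    rw [← hTr]
    exact hT.strictMonoOn.monotoneOn ⟨hr.1.le, hr.2.le⟩ ⟨(hr.1.trans hu.1).le, hu.2.le⟩ hu.1.le
  exact ⟨u, ⟨hr.1.trans hu.1, hu.2⟩, hq.1.trans_le hqu, sub_eq_zero.1 hTu⟩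

lemma exists_raySection (H : HasProperCore T c) (n : ℕ) :
    ∃ b : ℝ → InvLimit T, Continuous b ∧
      (∀ v ∈ Icc 0 (T c), b v ∈ rayArc T c n ∧ (b v).1 n = v) ∧
      ∀ x ∈ rayArc T c n, b (x.1 n) = x := by
  rw [rayArc_eq_branchSet]
  exact H.exists_branchSet_section ⟨le_rfl, H.unimodal.crit_pos.le⟩ H.unimodal.apply_zero
    (fun m hm => absurd (mem_univ m) hm) n

-- If `γ` left every arc, the first times at which coordinate `m` hits a point `u` of period two
-- would increase with `m` to a limit, and the coordinates there would converge to `u` and `T u`.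
lemma exists_forall_mem_rayArc_of_left (H : HasProperCore T c) {γ : ℝ → InvLimit T}
    (hγ : Continuous γ) {a b : ℝ} {k : ℕ} (ha : γ a ∈ rayArc T c k) :
    ∃ n, ∀ t ∈ Icc a b, γ t ∈ rayArc T c n := by
  by_contra! hcon
  obtain ⟨u, hu, hcu, hTu⟩ := H.exists_two_periodic
  have hcoord : ∀ m, Continuous fun t => (γ t).1 m := fun m => (continuous_coord_s1 m).comp hγ
  let hits : ℕ → Set ℝ := fun m => {t ∈ Icc a b | (γ t).1 m = u}
  have hits_before : ∀ m ≥ k + 2, ∀ t ∈ Icc a b, u < (γ t).1 m → ∃ s ∈ hits m, s ≤ t := by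
    intro m hm t ht hut
    have hstart := H.unimodal.coord_lt_of_mem_rayArc ⟨hu.1.le, hu.2.le⟩ hcu ha hm
    obtain ⟨s, hs, hsu⟩ := intermediate_value_Icc ht.1 (hcoord m).continuousOn
      ⟨hstart.le, hut.le⟩
    exact ⟨s, ⟨⟨hs.1, hs.2.trans ht.2⟩, hsu⟩, hs.2⟩
  have hits_pred : ∀ m ≥ k + 2, ∀ t ∈ hits (m + 1), ∃ s ∈ hits m, s ≤ t := by
    intro m hm t ht
    refine hits_before m hm t ht.1 ?_
    rw [← apply_coord_succ (γ t) m, ht.2]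
    exact hu.2.trans hcu
  have hits_nonempty : ∀ m ≥ k + 2, (hits m).Nonempty := by
    intro m hm
    obtain ⟨t, ht, hout⟩ := hcon m
    obtain ⟨m', hmm', hm'⟩ : ∃ m' > m, c < (γ t).1 m' := by simpa [rayArc] using hout
    obtain ⟨s, hs, -⟩ := hits_before m' (hm.trans hmm'.le) t ht (hu.2.trans hm')
    exact Nat.decreasingInduction' (P := fun i => (hits i).Nonempty)
      (fun i _ hi ⟨t, ht⟩ => (hits_pred i (hm.trans hi) t ht).imp fun _ => And.left)
      hmm'.le ⟨s, hs⟩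
  have hits_compact : ∀ m, IsCompact (hits m) := fun m =>
    isCompact_Icc.inter_right (isClosed_eq (hcoord m) continuous_const)
  choose t ht using fun j => (hits_compact (k + 2 + j)).exists_isLeast
    (hits_nonempty _ (Nat.le_add_right _ _))
  have hmono : Monotone t := monotone_nat_of_le_succ fun j => by
    obtain ⟨s, hs, hst⟩ := hits_pred (k + 2 + j) (Nat.le_add_right _ _) _ (ht (j + 1)).1
    exact ((ht j).2 hs).trans hst
  have hbdd : BddAbove (range t) := ⟨b, forall_mem_range.2 fun j => (ht j).1.1.2⟩
  have hfix := apply_eq_self_of_tendsto_of_two_periodic hTu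
    ((hγ.tendsto _).comp (tendsto_atTop_ciSup hmono hbdd)) fun j => (ht j).1.2
  exact (hu.2.trans hcu).ne' hfix

lemma exists_forall_mem_rayArc (H : HasProperCore T c) {γ : ℝ → InvLimit T} (hγ : Continuous γ)
    {t₀ : ℝ} {k : ℕ} (h : γ t₀ ∈ rayArc T c k) (a b : ℝ) :
    ∃ n, ∀ t ∈ Icc a b, γ t ∈ rayArc T c n := by
  obtain ⟨n, hn⟩ := H.exists_forall_mem_rayArc_of_left hγ (b := b) h
  obtain ⟨m, hm⟩ := H.exists_forall_mem_rayArc_of_left (γ := fun t => γ (-t)) (a := -t₀)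
    (b := -a) (hγ.comp continuous_neg) (k := k) (by rwa [neg_neg])
  refine ⟨max n m, fun t ht => ?_⟩
  rcases le_total t₀ t with htt | htt
  · exact rayArc_mono T c (le_max_left n m) (hn t ⟨htt, ht.2⟩)
  · have htm := hm (-t) ⟨neg_le_neg htt, neg_le_neg ht.1⟩
    rw [neg_neg] at htm
    exact rayArc_mono T c (le_max_right n m) htm

lemma exists_mapsTo_rayArc (H : HasProperCore T c) {φ : InvLimit T → InvLimit T}
    (hφ : Continuous φ) {N k : ℕ} {x : InvLimit T} (hx : x ∈ rayArc T c N)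
    (hk : φ x ∈ rayArc T c k) : ∃ n, MapsTo φ (rayArc T c N) (rayArc T c n) := by
  obtain ⟨b, hb, -, hbx⟩ := H.exists_raySection N
  obtain ⟨n, hn⟩ := H.exists_forall_mem_rayArc (hφ.comp hb) (t₀ := x.1 N) (k := k)
    (by rwa [Function.comp_apply, hbx x hx]) 0 (T c)
  refine ⟨n, fun y hy => ?_⟩
  have hyn := hn _ (H.coord_mem_Icc y N)
  rwa [Function.comp_apply, hbx y hy] at hyn

lemma not_isArcInterior_zeroPoint (H : HasProperCore T c) {h : T 0 = 0} :
    ¬ IsArcInterior (zeroPoint T h) := by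
  rintro ⟨γ, hγ, hinj, hγ0⟩
  obtain ⟨N, hN⟩ := H.exists_forall_mem_rayArc hγ (t₀ := 0) (k := 0)
    (by rw [hγ0]; exact zeroPoint_mem_rayArc H.unimodal.crit_pos.le 0) (-1) 1
  let f : ℝ → ℝ := fun t => (γ t).1 N
  have hf : ContinuousOn f (Icc (-1) 1) := ((continuous_coord_s1 N).comp hγ).continuousOn
  have hf_inj : InjOn f (Icc (-1) 1) := fun s hs t ht hst =>
    hinj hs ht (H.unimodal.eq_of_mem_rayArc (hN s hs) (hN t ht) hst)
  have hf_min : ∀ t, f 0 ≤ f t := fun t => by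
    simp only [f, hγ0]
    exact coord_nonneg (γ t) N
  rcases hf.strictMonoOn_of_injOn_Icc' (by norm_num) hf_inj with hmono | hanti
  · exact (hmono (by norm_num) (by norm_num) (neg_one_lt_zero (R := ℝ))).not_ge (hf_min _)
  · exact (hanti (by norm_num) (by norm_num) (zero_lt_one (α := ℝ))).not_ge (hf_min _)

lemma isArcInterior_of_mem_rayArc (H : HasProperCore T c) {h : T 0 = 0} {x : InvLimit T} {k : ℕ}
    (hx : x ∈ rayArc T c k) (hx0 : x ≠ zeroPoint T h) : IsArcInterior x := by
  have hx' : x ∈ rayArc T c (k + 1) := rayArc_mono T c k.le_succ hx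
  have hpos : 0 < x.1 (k + 1) := (coord_nonneg x _).lt_of_ne fun h0 => hx0 <|
    H.unimodal.eq_of_mem_rayArc hx' (zeroPoint_mem_rayArc H.unimodal.crit_pos.le _) h0.symm
  have hlt : x.1 (k + 1) < T c := (hx (k + 1) k.lt_succ_self).trans_lt H.lt_apply_crit
  rw [rayArc_eq_branchSet] at hx'
  exact H.isArcInterior_of_mem_branchSet ⟨le_rfl, H.unimodal.crit_pos.le⟩ h
    (fun m hm => absurd (mem_univ m) hm) hx' hpos hlt

lemma dense_iUnion_rayArc (H : HasProperCore T c) : Dense (⋃ n, rayArc T c n) := by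
  intro x
  choose b _ hb _ using H.exists_raySection
  have hlim : Tendsto (fun n => b n (x.1 n)) atTop (𝓝 x) := by
    rw [tendsto_subtype_rng, tendsto_pi_nhds]
    refine fun m => tendsto_const_nhds.congr' ?_
    filter_upwards [eventually_ge_atTop m] with n hn
    obtain ⟨j, rfl⟩ := Nat.exists_eq_add_of_le hn
    rw [← iterate_coord_add (b _ _) m j, (hb _ _ (H.coord_mem_Icc x _)).2, iterate_coord_add]
  exact mem_closure_of_tendsto hlim (Eventually.of_forall fun n =>
    mem_iUnion.2 ⟨n, (hb n _ (H.coord_mem_Icc x n)).1⟩)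

lemma isArcInterior_of_notMem_rayArc_zero (H : HasProperCore T c) {p : ℝ} (hp : p ∈ Icc 0 c)
    (hTp : T p = p) (hTTp : T (T c) ≤ p) {x : InvLimit T} (hx : x ∉ rayArc T c 0) :
    IsArcInterior x := by
  have hT := H.unimodal
  have hpc : p < c := hp.2.lt_of_ne fun h => H.lt_apply_crit.ne' (h ▸ hTp)
  obtain ⟨n, hpn, hnc⟩ : ∃ n, p < x.1 n ∧ x.1 n < T c := by
    obtain ⟨m, -, hm⟩ : ∃ m > 0, c < x.1 m := by simpa [rayArc] using hx
    rcases (coord_le_apply_crit hT x m).lt_or_eq with h | h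
    · exact ⟨m, hpc.trans hm, h⟩
    · have hsucc : x.1 (m + 1) = c :=
        hT.eq_crit_of_apply_eq (InvLimit.coord_mem_Icc x _) (by rw [apply_coord_succ x, h])
      exact ⟨m + 1, hsucc ▸ hpc, hsucc ▸ H.lt_apply_crit⟩
  have hge : ∀ m ≥ n, p ≤ x.1 m := fun m hm => by
    induction m, hm using Nat.le_induction with
    | base => exact hpn.le
    | succ m _ ih =>
      by_contra! hlt
      have := hT.strictMonoOn ⟨coord_nonneg x _, (hlt.trans hpc).le⟩ hp hlt
      rw [apply_coord_succ x, hTp] at this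
      exact this.not_ge ih
  exact H.isArcInterior_of_mem_branchSet hp hTp (s := {m | x.1 m ≤ c}) (fun _ _ => hTTp)
    ⟨hge, fun m _ => ⟨id, fun h => (not_le.1 h).le⟩⟩ hpn hnc

lemma apply_apply_crit_le_of_mem_Icc (H : HasProperCore T c)
    (hfix : ∀ p ∈ Icc 0 c, T p = p → p < T (T c)) {u : ℝ} (hu : u ∈ Icc (T (T c)) (T c)) :
    T (T c) ≤ T u := by
  have hT := H.unimodal
  rcases le_total u c with huc | huc
  · by_contra! hlt
    have hu0 : 0 ≤ u := (hfix 0 ⟨le_rfl, hT.crit_pos.le⟩ hT.apply_zero).le.trans hu.1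
    have hcont : ContinuousOn (fun v => T v - v) (Icc u c) :=
      (hT.continuousOn.mono (Icc_subset_Icc hu0 hT.crit_lt_one.le)).sub continuousOn_id
    obtain ⟨q, hq, hTq⟩ := intermediate_value_Icc huc hcont
      (show (0 : ℝ) ∈ Icc (T u - u) (T c - c) from
        ⟨by linarith [hu.1], by linarith [H.lt_apply_crit]⟩)
    exact (hfix q ⟨hu0.trans hq.1, hq.2⟩ (sub_eq_zero.1 hTq)).not_ge (hu.1.trans hq.1)
  · exact hT.strictAntiOn.antitoneOn ⟨huc, hu.2.trans hT.apply_crit_le_one⟩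
      ⟨H.lt_apply_crit.le, hT.apply_crit_le_one⟩ hu.2

lemma apply_apply_crit_le_of_forall_notMem_rayArc (H : HasProperCore T c)
    (hfix : ∀ p ∈ Icc 0 c, T p = p → p < T (T c)) {x : InvLimit T}
    (hx : ∀ n, x ∉ rayArc T c n) (n : ℕ) : T (T c) ≤ x.1 n := by
  by_contra! hlt
  have hlt_all : ∀ m ≥ n, x.1 m < T (T c) := fun m hm => by
    induction m, hm using Nat.le_induction with
    | base => exact hlt
    | succ m _ ih =>
      by_contra! hge
      have := H.apply_apply_crit_le_of_mem_Icc hfix ⟨hge, coord_le_apply_crit H.unimodal x _⟩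
      rw [apply_coord_succ x] at this
      exact this.not_gt ih
  exact hx n fun m hm => ((hlt_all m hm.le).trans H.apply_apply_crit_lt).le

lemma map_zeroPoint (H : HasProperCore T c) {h : T 0 = 0} (φ : InvLimit T ≃ₜ InvLimit T) :
    φ (zeroPoint T h) = zeroPoint T h := by
  have hc := H.unimodal.crit_pos.le
  have hnot : ¬ IsArcInterior (φ (zeroPoint T h)) := fun harc =>
    H.not_isArcInterior_zeroPoint (h := h) <|
      φ.symm_apply_apply (zeroPoint T h) ▸ harc.map φ.symm.continuous φ.symm.injective
  suffices hray : ∃ n, φ (zeroPoint T h) ∈ rayArc T c n by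
    obtain ⟨n, hn⟩ := hray
    by_contra h0
    exact hnot (H.isArcInterior_of_mem_rayArc hn h0)
  by_cases hfix : ∃ p ∈ Icc 0 c, T p = p ∧ T (T c) ≤ p
  · obtain ⟨p, hp, hTp, hTTp⟩ := hfix
    by_contra! hout
    exact hnot (H.isArcInterior_of_notMem_rayArc_zero hp hTp hTTp (hout 0))
  · push Not at hfix
    by_contra! hout
    -- `φ` maps the whole ray, hence by density everything, away from the zero point.
    have hray : ∀ x ∈ ⋃ n, rayArc T c n, T (T c) ≤ (φ x).1 0 := fun x hx => by
      obtain ⟨N, hN⟩ := mem_iUnion.1 hx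
      refine H.apply_apply_crit_le_of_forall_notMem_rayArc hfix (fun k hk => ?_) 0
      obtain ⟨n, hn⟩ := H.exists_mapsTo_rayArc φ.continuous hN hk
      exact hout n (hn (zeroPoint_mem_rayArc hc N))
    have hclosed : IsClosed {x | T (T c) ≤ (φ x).1 0} :=
      isClosed_le continuous_const ((continuous_coord_s1 0).comp φ.continuous)
    have hle : T (T c) ≤ (φ (φ.symm (zeroPoint T h))).1 0 :=
      closure_minimal hray hclosed (H.dense_iUnion_rayArc _)
    rw [φ.apply_symm_apply] at hle
    exact (hfix 0 ⟨le_rfl, hc⟩ H.unimodal.apply_zero).not_ge hle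

lemma exists_mapsTo_rayArc_and_coord_lt (H : HasProperCore T c) (φ : InvLimit T ≃ₜ InvLimit T)
    (N : ℕ) :
    ∃ n, MapsTo φ (rayArc T c N) (rayArc T c n) ∧
      ∀ x ∈ rayArc T c N, ∀ y ∈ rayArc T c N, x.1 N < y.1 N → (φ x).1 n < (φ y).1 n := by
  have hT := H.unimodal
  have hzero := zeroPoint_mem_rayArc (h := hT.apply_zero) hT.crit_pos.le N
  obtain ⟨n, hn⟩ := H.exists_mapsTo_rayArc φ.continuous hzero (k := 0)
    (by rw [H.map_zeroPoint]; exact zeroPoint_mem_rayArc hT.crit_pos.le 0)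
  obtain ⟨b, hb, hbv, hbx⟩ := H.exists_raySection N
  let f : ℝ → ℝ := fun v => (φ (b v)).1 n
  have hf : ContinuousOn f (Icc 0 (T c)) :=
    ((continuous_coord_s1 n).comp (φ.continuous.comp hb)).continuousOn
  have hf0 : f 0 = 0 := by
    have := hbx _ hzero
    simp only [f, show b 0 = zeroPoint T hT.apply_zero from this, H.map_zeroPoint]
    rfl
  have hf_inj : InjOn f (Icc 0 (T c)) := fun u hu v hv huv => by
    have := φ.injective (hT.eq_of_mem_rayArc (hn (hbv u hu).1) (hn (hbv v hv).1) huv)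
    rw [← (hbv u hu).2, ← (hbv v hv).2, this]
  have hmono : StrictMonoOn f (Icc 0 (T c)) :=
    hf.strictMonoOn_of_injOn_Icc H.apply_crit_pos.le (hf0.trans_le (coord_nonneg (T := T) _ _))
      hf_inj
  refine ⟨n, hn, fun x hx y hy hxy => ?_⟩
  simpa only [f, hbx x hx, hbx y hy] using hmono (H.coord_mem_Icc x N) (H.coord_mem_Icc y N) hxy

end HasProperCore

/-! ### Logarithms of difference vectors -/

section Lifts

open Complex

lemma exists_int_forall_eq_add_of_exp_eq {A : Type*} [TopologicalSpace A] {S : Set A}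
    (hS : IsPreconnected S) {f g : A → ℂ} (hf : ContinuousOn f S) (hg : ContinuousOn g S)
    (h : ∀ a ∈ S, exp (f a) = exp (g a)) :
    ∃ k : ℤ, ∀ a ∈ S, f a = g a + k * (2 * Real.pi * I) := by
  have hexists : ∀ a, ∃ n : ℤ, a ∈ S → f a = g a + n * (2 * Real.pi * I) := fun a => by
    by_cases ha : a ∈ S
    · exact (exp_eq_exp_iff_exists_int.1 (h a ha)).imp fun _ hn _ => hn
    · exact ⟨0, fun h => absurd h ha⟩
  choose n hn using hexists
  have hcont : ContinuousOn n S := by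
    rw [Int.isClosedEmbedding_coe_real.isInducing.continuousOn_iff]
    have him : ContinuousOn (fun a => (f a - g a).im / (2 * Real.pi)) S :=
      (continuous_im.comp_continuousOn (hf.sub hg)).div_const _
    refine him.congr fun a ha => ?_
    simp only [Function.comp_apply, hn a ha]
    rw [eq_div_iff Real.two_pi_pos.ne']
    simp
  rcases S.eq_empty_or_nonempty with rfl | ⟨a₀, ha₀⟩
  · exact ⟨0, by simp⟩
  · exact ⟨n a₀, fun a ha => by rw [hS.constant hcont ha₀ ha, hn a ha]⟩

/-- `Λ (z, u)` is a continuous choice of `log (Φ (z + exp u) - Φ z)`. Exchanging the two points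
turns `u` into `u + π i`, which changes the logarithm by `d` half-turns; so `d` is the degree with
which `Φ` turns difference vectors. -/
structure IsDifferenceLog (Φ : ℂ → ℂ) (Λ : ℂ × ℂ → ℂ) (d : ℤ) : Prop where
  continuous : Continuous Λ
  exp_eq : ∀ z u, exp (Λ (z, u)) = Φ (z + exp u) - Φ z
  half_turn : ∀ z u, Λ (z + exp u, u + Real.pi * I) = Λ (z, u) + d * (Real.pi * I)

namespace IsDifferenceLog

variable {Φ : ℂ → ℂ} {Λ : ℂ × ℂ → ℂ} {d : ℤ}

lemma turn (h : IsDifferenceLog Φ Λ d) (z u : ℂ) :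
    Λ (z, u + 2 * Real.pi * I) = Λ (z, u) + d * (2 * Real.pi * I) := by
  have hhalf := h.half_turn (z + exp u) (u + Real.pi * I)
  rw [exp_add, exp_pi_mul_I, mul_neg_one, add_neg_cancel_right, h.half_turn] at hhalf
  rw [show u + 2 * Real.pi * I = u + Real.pi * I + Real.pi * I by ring, hhalf]
  ring

lemma int_turns (h : IsDifferenceLog Φ Λ d) (z u : ℂ) (m : ℤ) :
    Λ (z, u + m * (2 * Real.pi * I)) = Λ (z, u) + d * m * (2 * Real.pi * I) := by
  induction m with
  | zero => simp
  | succ m ih =>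
    have hturn := h.turn z (u + m * (2 * Real.pi * I))
    push_cast at ih ⊢
    rw [show u + (m + 1) * (2 * Real.pi * I) = u + m * (2 * Real.pi * I) + 2 * Real.pi * I by ring,
      hturn, ih]
    ring
  | pred m ih =>
    have hturn := h.turn z (u + (-m - 1) * (2 * Real.pi * I))
    push_cast at ih ⊢
    rw [show u + (-m - 1) * (2 * Real.pi * I) + 2 * Real.pi * I = u + -m * (2 * Real.pi * I) by
      ring, ih] at hturn
    linear_combination -hturn

lemma sub_int_turns (h : IsDifferenceLog Φ Λ d) (k : ℤ) :
    IsDifferenceLog Φ (fun p => Λ p - k * (2 * Real.pi * I)) d where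
  continuous := h.continuous.sub continuous_const
  exp_eq z u := by rw [exp_sub, exp_int_mul_two_pi_mul_I, div_one, h.exp_eq]
  half_turn z u := by rw [h.half_turn]; ring

lemma exists_norm_sub_le (h : IsDifferenceLog Φ Λ d) {Z : Set ℂ} (hZ : IsCompact Z) (r M : ℝ) :
    ∃ C, ∀ z ∈ Z, ∀ u : ℂ, r ≤ u.re → u.re ≤ M → ‖Λ (z, u) - d * u‖ ≤ C := by
  have hΛ := h.continuous
  obtain ⟨C, hC⟩ := (hZ.prod (isCompact_Icc.reProdIm isCompact_Icc :
    IsCompact (Icc r M ×ℂ Icc 0 (2 * Real.pi)))).exists_bound_of_continuousOn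
    (f := fun p : ℂ × ℂ => Λ p - d * p.2) (by fun_prop)
  refine ⟨C, fun z hz u hr hM => ?_⟩
  set m : ℤ := ⌊u.im / (2 * Real.pi)⌋
  have hm : (m : ℝ) * (2 * Real.pi) ≤ u.im :=
    (le_div_iff₀ Real.two_pi_pos).1 (Int.floor_le _)
  have hm' : u.im < (m + 1) * (2 * Real.pi) :=
    (div_lt_iff₀ Real.two_pi_pos).1 (Int.lt_floor_add_one _)
  have hmem : u + (-m : ℤ) * (2 * Real.pi * I) ∈ Icc r M ×ℂ Icc 0 (2 * Real.pi) := by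
    refine mem_reProdIm.2 ⟨by simpa using ⟨hr, hM⟩, ?_⟩
    have him : (u + (-m : ℤ) * (2 * Real.pi * I)).im = u.im - m * (2 * Real.pi) := by simp; ring
    rw [him]
    exact ⟨by linarith, by linarith⟩
  have hbound := hC (z, u + (-m : ℤ) * (2 * Real.pi * I)) ⟨hz, hmem⟩
  rwa [h.int_turns, show Λ (z, u) + d * (-m : ℤ) * (2 * Real.pi * I) -
    d * (u + (-m : ℤ) * (2 * Real.pi * I)) = Λ (z, u) - d * u by ring] at hbound

end IsDifferenceLog

lemma exists_isDifferenceLog {Φ : ℂ → ℂ} (hc : Continuous Φ) (hi : Function.Injective Φ) :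
    ∃ Λ d, IsDifferenceLog Φ Λ d := by
  have hne : ∀ z u : ℂ, Φ (z + exp u) - Φ z ≠ 0 := fun z u =>
    sub_ne_zero.2 (hi.ne (by simp))
  have hsc : IsSimplyConnected (univ : Set (ℂ × ℂ)) := by
    have : ContractibleSpace (univ : Set (ℂ × ℂ)) :=
      (Homeomorph.Set.univ (ℂ × ℂ)).contractibleSpace
    exact SimplyConnectedSpace.ofContractible _
  obtain ⟨Λ, hΛ, hexp⟩ := exists_continuousOn_eqOn_exp_comp hsc isOpen_univ
    (g := fun p : ℂ × ℂ => Φ (p.1 + exp p.2) - Φ p.1) (by fun_prop)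
    (by rintro ⟨p, -, h⟩; exact hne _ _ h)
  rw [continuousOn_univ] at hΛ
  have hlog : ∀ z u, exp (Λ (z, u)) = Φ (z + exp u) - Φ z := fun z u => hexp (mem_univ (z, u))
  obtain ⟨k, hk⟩ := exists_int_forall_eq_add_of_exp_eq (isPreconnected_univ (α := ℂ × ℂ))
    (f := fun p => Λ (p.1 + exp p.2, p.2 + Real.pi * I)) (g := fun p => Λ p + Real.pi * I)
    (by fun_prop) (by fun_prop) (by
      rintro ⟨z, u⟩ -
      rw [hlog, exp_add, exp_add, exp_pi_mul_I, hlog]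
      simp)
  refine ⟨Λ, 2 * k + 1, hΛ, hlog, fun z u => ?_⟩
  rw [hk (z, u) (mem_univ _)]
  push_cast
  ring

lemma IsDifferenceLog.degree_eq_one_or_neg_one (Φ : ℂ ≃ₜ ℂ) {Λ : ℂ × ℂ → ℂ} {d : ℤ}
    (h : IsDifferenceLog Φ Λ d) : d = 1 ∨ d = -1 := by
  obtain ⟨Λ', d', h'⟩ := exists_isDifferenceLog Φ.symm.continuous Φ.symm.injective
  have hΛ := h.continuous
  have hΛ' := h'.continuous
  have hΦ := Φ.symm.continuous
  obtain ⟨k, hk⟩ := exists_int_forall_eq_add_of_exp_eq (isPreconnected_univ (α := ℂ × ℂ))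
    (f := fun p => Λ (Φ.symm p.1, Λ' p)) (g := fun p => p.2) (by fun_prop) (by fun_prop) (by
      rintro ⟨z, u⟩ -
      rw [h.exp_eq, h'.exp_eq]
      simp)
  have hzero : Λ (Φ.symm 0, Λ' (0, 0)) = 0 + k * (2 * Real.pi * I) := hk (0, 0) (mem_univ _)
  have hturn : Λ (Φ.symm 0, Λ' (0, 0 + 2 * Real.pi * I)) =
      0 + 2 * Real.pi * I + k * (2 * Real.pi * I) := hk (0, 0 + 2 * Real.pi * I) (mem_univ _)
  rw [h'.turn, h.int_turns, hzero] at hturn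
  have hmul : (d * d' : ℂ) = 1 :=
    mul_right_cancel₀ two_pi_I_ne_zero (by linear_combination hturn)
  exact Int.eq_one_or_neg_one_of_mul_eq_one (by exact_mod_cast hmul)

end Lifts

/-! ### Hénon-type extensions of an interval map -/

section PairLog

open Complex

variable {Φ : ℂ → ℂ} {Λ : ℂ × ℂ → ℂ} {d : ℤ}

/-- The value at the pair of points `z`, `w` of a difference logarithm, on the principal branch of
`log (w - z)`. -/
noncomputable def vecLog (Λ : ℂ × ℂ → ℂ) (z w : ℂ) : ℂ := Λ (z, log (w - z))

lemma IsDifferenceLog.exp_vecLog (h : IsDifferenceLog Φ Λ d) {z w : ℂ} (hzw : z ≠ w) :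
    exp (vecLog Λ z w) = Φ w - Φ z := by
  rw [vecLog, h.exp_eq, exp_log (sub_ne_zero.2 hzw.symm), add_sub_cancel]

lemma IsDifferenceLog.vecLog_comm_of_im_lt (h : IsDifferenceLog Φ Λ d) {z w : ℂ}
    (hzw : z.im < w.im) : vecLog Λ z w = vecLog Λ w z + d * (Real.pi * I) := by
  have him : 0 < (w - z).im := by rwa [sub_im, sub_pos]
  have hne : z - w ≠ 0 := fun h0 => by
    rw [← neg_sub, neg_eq_zero] at h0
    simp [h0] at him
  have hlog : log (w - z) = log (z - w) + Real.pi * I := by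
    rw [← neg_sub w z]
    simp only [log, arg_neg_eq_arg_sub_pi_of_im_pos him, norm_neg, ofReal_sub]
    ring
  have hhalf := h.half_turn w (log (z - w))
  rwa [exp_log hne, add_sub_cancel, ← hlog] at hhalf

lemma continuousOn_vecLog (hΛ : Continuous Λ) :
    ContinuousOn (fun p : ℂ × ℂ => vecLog Λ p.1 p.2) {p | p.2 - p.1 ∈ slitPlane} :=
  hΛ.comp_continuousOn <| continuousOn_fst.prodMk <|
    (continuousOn_snd.sub continuousOn_fst).clog fun _ hp => hp

/-- The logarithm of `Φ b - Φ a`, for real `a < b`, given by a difference logarithm of `Φ`;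
symmetric in `a` and `b`. -/
noncomputable def pairLog (Λ : ℂ × ℂ → ℂ) (a b : ℝ) : ℂ :=
  vecLog Λ (min a b : ℝ) (max a b : ℝ)

lemma pairLog_comm (Λ : ℂ × ℂ → ℂ) (a b : ℝ) : pairLog Λ a b = pairLog Λ b a := by
  rw [pairLog, pairLog, min_comm, max_comm]

lemma pairLog_of_lt (Λ : ℂ × ℂ → ℂ) {a b : ℝ} (h : a < b) : pairLog Λ a b = vecLog Λ a b := by
  rw [pairLog, min_eq_left h.le, max_eq_right h.le]

lemma IsDifferenceLog.exp_pairLog (h : IsDifferenceLog Φ Λ d) {a b : ℝ} (hab : a < b) :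
    exp (pairLog Λ a b) = Φ b - Φ a := by
  rw [pairLog_of_lt Λ hab, h.exp_vecLog (ofReal_injective.ne hab.ne)]

lemma continuousOn_pairLog (hΛ : Continuous Λ) :
    ContinuousOn (fun p : ℝ × ℝ => pairLog Λ p.1 p.2) {p | p.1 ≠ p.2} := by
  refine (continuousOn_vecLog hΛ).comp (f := fun p : ℝ × ℝ =>
    (((min p.1 p.2 : ℝ) : ℂ), ((max p.1 p.2 : ℝ) : ℂ))) (by fun_prop) fun p hp => ?_
  rw [mem_ofPred_eq, ← ofReal_sub, ofReal_mem_slitPlane, sub_pos]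
  exact min_lt_max.2 hp

end PairLog

/-- The pairs of points of `[0, 1]` that are `1 / (n + 1)`-separated by one of the iterates `T^[i]`
with `i ≤ n`. -/
def separatedPairs (T : ℝ → ℝ) (n : ℕ) : Set (ℝ × ℝ) :=
  {p | p.1 ∈ Icc (0 : ℝ) 1 ∧ p.2 ∈ Icc (0 : ℝ) 1 ∧
    ∃ i ≤ n, 1 / ((n : ℝ) + 1) ≤ |T^[i] p.1 - T^[i] p.2|}

lemma isCompact_separatedPairs {T : ℝ → ℝ} (hT : Continuous T) (n : ℕ) :
    IsCompact (separatedPairs T n) := by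
  have heq : separatedPairs T n = (Icc (0 : ℝ) 1 ×ˢ Icc (0 : ℝ) 1) ∩
      ⋃ i ∈ Iic n, {p : ℝ × ℝ | 1 / ((n : ℝ) + 1) ≤ |T^[i] p.1 - T^[i] p.2|} := by
    ext p
    simp only [separatedPairs, mem_ofPred_eq, mem_inter_iff, mem_prod, mem_iUnion, mem_Iic,
      exists_prop, and_assoc]
  rw [heq]
  refine (isCompact_Icc.prod isCompact_Icc).inter_right <|
    (finite_Iic n).isClosed_biUnion fun i _ => isClosed_le continuous_const ?_
  exact (((hT.iterate i).comp continuous_fst).sub ((hT.iterate i).comp continuous_snd)).abs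

lemma ne_of_mem_separatedPairs {T : ℝ → ℝ} {n : ℕ} {a b : ℝ} (h : (a, b) ∈ separatedPairs T n) :
    a ≠ b := by
  rintro rfl
  obtain ⟨-, -, i, -, hsep⟩ := h
  rw [sub_self, abs_zero] at hsep
  exact absurd Nat.one_div_pos_of_nat hsep.not_gt

lemma separatedPairs_symm {T : ℝ → ℝ} {n : ℕ} {a b : ℝ} (h : (a, b) ∈ separatedPairs T n) :
    (b, a) ∈ separatedPairs T n := by
  obtain ⟨ha, hb, i, hi, hsep⟩ := h
  exact ⟨hb, ha, i, hi, by rwa [abs_sub_comm]⟩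

lemma exists_pos_le_norm_of_mem_separatedPairs {T : ℝ → ℝ} (hT : Continuous T) (n : ℕ) {Φ : ℂ → ℂ}
    (hΦ : Continuous Φ) (hinj : Function.Injective Φ) :
    ∃ m > 0, ∀ a b : ℝ, (a, b) ∈ separatedPairs T n → m ≤ ‖Φ a - Φ b‖ := by
  obtain ⟨m, hm, hle⟩ := (isCompact_separatedPairs hT n).exists_forall_le'
    (f := fun p => ‖Φ p.1 - Φ p.2‖) (a := 0) (by fun_prop) fun p hp =>
      norm_sub_pos_iff.2 (hinj.ne (Complex.ofReal_injective.ne (ne_of_mem_separatedPairs hp)))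
  exact ⟨m, hm, fun a b hab => hle (a, b) hab⟩

/-- `1` if `T` reverses the order of `a` and `b`, and `0` otherwise. -/
noncomputable def orderFlip (T : ℝ → ℝ) (a b : ℝ) : ℤ := if (a - b) * (T a - T b) < 0 then 1 else 0

lemma orderFlip_comm (T : ℝ → ℝ) (a b : ℝ) : orderFlip T a b = orderFlip T b a := by
  rw [orderFlip, orderFlip, ← neg_sub b, ← neg_sub (T b), neg_mul_neg]

lemma orderFlip_eq_zero_or_one (T : ℝ → ℝ) (a b : ℝ) : orderFlip T a b = 0 ∨ orderFlip T a b = 1 :=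
  (ite_eq_or_eq _ _ _).symm

lemma orderFlip_of_lt_of_lt {T : ℝ → ℝ} {a b : ℝ} (h : a < b) (hT : T a < T b) :
    orderFlip T a b = 0 := if_neg (by nlinarith)

lemma orderFlip_of_lt_of_gt {T : ℝ → ℝ} {a b : ℝ} (h : a < b) (hT : T b < T a) :
    orderFlip T a b = 1 := if_pos (by nlinarith)

section Henon

open Complex

variable {T : ℝ → ℝ} {Φ : ℂ → ℂ} {Λ Λ' : ℂ × ℂ → ℂ} {d d' ε : ℤ} {κ : ℝ}

/-- The point `(T a, κ a)` of the plane: the image of the real point `a` under the Hénon-type map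
`(x, y) ↦ (T x + y, κ x)`. -/
noncomputable def henonCurve (T : ℝ → ℝ) (κ a : ℝ) : ℂ := T a + κ * a * I

/-- The Hénon-type homeomorphism `(x, y) ↦ (T x + y, κ x)` of the plane. -/
noncomputable def henon (T : ℝ → ℝ) (hT : Continuous T) (κ : ℝ) (hκ : κ ≠ 0) : ℂ ≃ₜ ℂ where
  toFun z := henonCurve T κ z.re + z.im
  invFun w := (w.im / κ : ℝ) + (w.re - T (w.im / κ) : ℝ) * I
  left_inv z := by
    apply Complex.ext <;> simp [henonCurve, mul_div_cancel_left₀ _ hκ]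
  right_inv w := by
    apply Complex.ext <;> simp [henonCurve, mul_div_cancel₀ _ hκ]
  continuous_toFun := by unfold henonCurve; fun_prop
  continuous_invFun := by fun_prop

lemma henon_ofReal (T : ℝ → ℝ) (hT : Continuous T) (κ : ℝ) (hκ : κ ≠ 0) (a : ℝ) :
    henon T hT κ hκ a = henonCurve T κ a := by
  change henonCurve T κ (a : ℂ).re + (a : ℂ).im = _
  rw [ofReal_re, ofReal_im, ofReal_zero, add_zero]

lemma henonCurve_zero (T : ℝ → ℝ) (a : ℝ) : henonCurve T 0 a = T a := by
  rw [henonCurve, ofReal_zero, zero_mul, zero_mul, add_zero]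

lemma henonCurve_im (T : ℝ → ℝ) (κ a : ℝ) : (henonCurve T κ a).im = κ * a := by
  simp [henonCurve]

lemma henonCurve_re (T : ℝ → ℝ) (κ a : ℝ) : (henonCurve T κ a).re = T a := by
  simp [henonCurve]

lemma continuous_henonCurve (hT : Continuous T) :
    Continuous fun p : ℝ × ℝ => henonCurve T p.1 p.2 := by
  unfold henonCurve
  fun_prop

lemma eventually_forall_norm_henonCurve_sub_le (hT : Continuous T) (hΦ : Continuous Φ)
    {η : ℝ} (hη : 0 < η) :
    ∀ᶠ κ in 𝓝 (0 : ℝ), ∀ x ∈ Icc (0 : ℝ) 1, ‖Φ (henonCurve T κ x) - Φ (T x)‖ ≤ η := by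
  have hcont : Continuous (fun κ x => Φ (henonCurve T κ x)).uncurry :=
    hΦ.comp (continuous_henonCurve hT)
  obtain ⟨v, hv, hclose⟩ := isCompact_Icc.mem_uniformity_of_prod (s := univ) hcont.continuousOn
    (mem_univ (0 : ℝ)) (Metric.dist_mem_uniformity hη)
  rw [nhdsWithin_univ] at hv
  filter_upwards [hv] with κ hκ x hx
  have hdist : dist (Φ (henonCurve T κ x)) (Φ (henonCurve T 0 x)) < η := hclose κ hκ x hx
  rw [henonCurve_zero, dist_eq_norm] at hdist
  exact hdist.le

lemma eventually_forall_norm_vecLog_henonCurve_sub_le (hT : Continuous T) (hΛ : Continuous Λ)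
    (n : ℕ) {η : ℝ} (hη : 0 < η) :
    ∀ᶠ κ in 𝓝 (0 : ℝ), ∀ a ∈ Icc (0 : ℝ) 1, ∀ b ∈ Icc (0 : ℝ) 1, T a < T b →
      (T a, T b) ∈ separatedPairs T n →
      ‖vecLog Λ (henonCurve T κ a) (henonCurve T κ b) - pairLog Λ (T a) (T b)‖ ≤ η := by
  have hT2 : Continuous fun p : ℝ × ℝ => (T p.1, T p.2) := by fun_prop
  let K : Set (ℝ × ℝ) := (Icc (0 : ℝ) 1 ×ˢ Icc (0 : ℝ) 1) ∩
    (fun p => (T p.1, T p.2)) ⁻¹' (separatedPairs T n ∩ {p | p.1 ≤ p.2})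
  have hK : IsCompact K :=
    (isCompact_Icc.prod isCompact_Icc).inter_right <|
      ((isCompact_separatedPairs hT n).isClosed.inter
        (isClosed_le continuous_fst continuous_snd)).preimage hT2
  have hcurve : Continuous fun q : ℝ × ℝ × ℝ =>
      (henonCurve T q.1 q.2.1, henonCurve T q.1 q.2.2) := by
    unfold henonCurve
    fun_prop
  have hcont := (continuousOn_vecLog hΛ).comp (hcurve.continuousOn (s := univ ×ˢ K))
    fun q hq => by
      have hlt : T q.2.1 < T q.2.2 := hq.2.2.2.lt_of_ne (ne_of_mem_separatedPairs hq.2.2.1)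
      refine Or.inl ?_
      simpa only [sub_re, henonCurve_re, sub_pos] using hlt
  obtain ⟨v, hv, hclose⟩ := hK.mem_uniformity_of_prod (s := univ)
    (f := fun κ (p : ℝ × ℝ) => vecLog Λ (henonCurve T κ p.1) (henonCurve T κ p.2)) hcont
    (mem_univ 0) (Metric.dist_mem_uniformity hη)
  rw [nhdsWithin_univ] at hv
  filter_upwards [hv] with κ hκ a ha b hb hlt hsep
  have hdist : dist (vecLog Λ (henonCurve T κ a) (henonCurve T κ b))
      (vecLog Λ (henonCurve T 0 a) (henonCurve T 0 b)) < η :=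
    hclose κ hκ (a, b) ⟨⟨ha, hb⟩, hsep, hlt.le⟩
  rw [henonCurve_zero, henonCurve_zero, dist_eq_norm, ← pairLog_of_lt Λ hlt] at hdist
  exact hdist.le

lemma exists_isDifferenceLog_henon_trans (hT : Continuous T) (hκ : κ ≠ 0) (Φ : ℂ ≃ₜ ℂ)
    (h : IsDifferenceLog Φ Λ d) :
    ∃ Λ' d', IsDifferenceLog ((henon T hT κ hκ).trans Φ) Λ' d' ∧
      ∀ a b : ℝ, a < b → pairLog Λ' a b = vecLog Λ (henonCurve T κ a) (henonCurve T κ b) := by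
  obtain ⟨Λ₀, d', h₀⟩ := exists_isDifferenceLog ((henon T hT κ hκ).trans Φ).continuous
    ((henon T hT κ hκ).trans Φ).injective
  have hpre : IsPreconnected {p : ℝ × ℝ | p.1 < p.2} := by
    have hconv := convex_halfSpace_lt (𝕜 := ℝ) (f := fun p : ℝ × ℝ => p.1 - p.2)
      (LinearMap.fst ℝ ℝ ℝ - LinearMap.snd ℝ ℝ ℝ).isLinear 0
    simpa only [sub_neg] using hconv.isPreconnected
  have him : ∀ {a b : ℝ}, a < b → (henonCurve T κ b - henonCurve T κ a).im ≠ 0 := fun hab => by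
    rw [sub_im, henonCurve_im, henonCurve_im, ← mul_sub]
    exact mul_ne_zero hκ (sub_ne_zero.2 hab.ne')
  have hcurve : Continuous fun p : ℝ × ℝ => (henonCurve T κ p.1, henonCurve T κ p.2) := by
    unfold henonCurve
    fun_prop
  obtain ⟨k, hk⟩ := exists_int_forall_eq_add_of_exp_eq hpre (f := fun p => pairLog Λ₀ p.1 p.2)
    (g := fun p => vecLog Λ (henonCurve T κ p.1) (henonCurve T κ p.2))
    ((continuousOn_pairLog h₀.continuous).mono fun _ hp => ne_of_lt hp)
    ((continuousOn_vecLog h.continuous).comp hcurve.continuousOn fun p hp => Or.inr (him hp))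
    fun p hp => by
      have hne : henonCurve T κ p.1 ≠ henonCurve T κ p.2 := fun heq => him hp (by simp [heq])
      rw [h₀.exp_pairLog hp, h.exp_vecLog hne, Homeomorph.trans_apply, Homeomorph.trans_apply,
        henon_ofReal, henon_ofReal]
  refine ⟨_, d', h₀.sub_int_turns k, fun a b hab => ?_⟩
  exact sub_eq_of_eq_add (hk (a, b) hab)

/- The tilt `κ` makes the folded arc turn to the left or to the right, according to its sign. -/
lemma IsDifferenceLog.vecLog_henonCurve_comm (h : IsDifferenceLog Φ Λ d)
    (hκ : 0 < κ ∧ d = ε ∨ κ < 0 ∧ d = -ε) {a b : ℝ} (hab : a < b) :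
    vecLog Λ (henonCurve T κ a) (henonCurve T κ b) =
      vecLog Λ (henonCurve T κ b) (henonCurve T κ a) + ε * (Real.pi * I) := by
  rcases hκ with ⟨hκ, rfl⟩ | ⟨hκ, rfl⟩
  · refine h.vecLog_comm_of_im_lt ?_
    rw [henonCurve_im, henonCurve_im]
    exact mul_lt_mul_of_pos_left hab hκ
  · have hcomm := h.vecLog_comm_of_im_lt (z := henonCurve T κ b) (w := henonCurve T κ a) (by
      rw [henonCurve_im, henonCurve_im]
      exact mul_lt_mul_of_neg_left hab hκ)
    rw [hcomm]
    push_cast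
    ring

end Henon

/-- A homeomorphism of the plane used to embed the `n`-th coordinate interval, together with a
difference logarithm and a bound from below on the distance of the images of the two points of a
pair in `separatedPairs T n`. -/
structure Stage (T : ℝ → ℝ) (n : ℕ) where
  map : ℂ ≃ₜ ℂ
  log : ℂ × ℂ → ℂ
  degree : ℤ
  gap : ℝ
  isDifferenceLog : IsDifferenceLog map log degree
  gap_pos : 0 < gap
  gap_le_one : gap ≤ 1
  gap_le_norm : ∀ a b : ℝ, (a, b) ∈ separatedPairs T n → gap ≤ ‖map a - map b‖

namespace Stage

variable {T : ℝ → ℝ} {n : ℕ}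

/-- `S'` nearly factors through `T` and `S`, and folds to the side prescribed by `ε`: whenever `T`
reverses the order of two points, the logarithm of their difference changes by about `ε π i`. -/
structure Refines (S' : Stage T (n + 1)) (S : Stage T n) (ε : ℤ) : Prop where
  gap_le : S'.gap ≤ S.gap
  norm_map_sub_le : ∀ x ∈ Icc (0 : ℝ) 1, ‖S'.map x - S.map (T x)‖ ≤ (1 / 2) ^ (n + 3) * S.gap
  norm_pairLog_sub_le : ∀ a ∈ Icc (0 : ℝ) 1, ∀ b ∈ Icc (0 : ℝ) 1,
    (T a, T b) ∈ separatedPairs T n →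
    ‖pairLog S'.log a b - pairLog S.log (T a) (T b) -
      ε * orderFlip T a b * (Real.pi * Complex.I)‖ ≤ (1 / 2) ^ n

lemma exists_tilt (S : Stage T n) {ε : ℤ} (hε : ε = 1 ∨ ε = -1) {P : ℝ → Prop}
    (hP : ∀ᶠ κ in 𝓝 (0 : ℝ), P κ) :
    ∃ κ, P κ ∧ (0 < κ ∧ S.degree = ε ∨ κ < 0 ∧ S.degree = -ε) := by
  have hd := S.isDifferenceLog.degree_eq_one_or_neg_one
  by_cases hdε : S.degree = ε
  · obtain ⟨κ, hκP, hκ⟩ := ((hP.filter_mono nhdsWithin_le_nhds).and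
      (self_mem_nhdsWithin (s := Ioi 0))).exists
    exact ⟨κ, hκP, Or.inl ⟨hκ, hdε⟩⟩
  · obtain ⟨κ, hκP, hκ⟩ := ((hP.filter_mono nhdsWithin_le_nhds).and
      (self_mem_nhdsWithin (s := Iio 0))).exists
    exact ⟨κ, hκP, Or.inr ⟨hκ, by omega⟩⟩

lemma exists_refines (S : Stage T n) (hT : Continuous T)
    {ε : ℤ} (hε : ε = 1 ∨ ε = -1) : ∃ S' : Stage T (n + 1), S'.Refines S ε := by
  have hη : 0 < (1 / 2) ^ (n + 3) * S.gap := mul_pos (by positivity) S.gap_pos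
  obtain ⟨κ, ⟨hmap, hlog⟩, hκ⟩ := S.exists_tilt hε
    ((eventually_forall_norm_henonCurve_sub_le hT S.map.continuous hη).and
      (eventually_forall_norm_vecLog_henonCurve_sub_le hT S.isDifferenceLog.continuous n
        (η := (1 / 2) ^ n) (by positivity)))
  have hκ0 : κ ≠ 0 := by
    rcases hκ with ⟨h, -⟩ | ⟨h, -⟩
    exacts [h.ne', h.ne]
  obtain ⟨Λ', d', hΛ', hpair⟩ :=
    exists_isDifferenceLog_henon_trans hT hκ0 S.map S.isDifferenceLog
  set Φ' := (henon T hT κ hκ0).trans S.map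
  obtain ⟨m, hm0, hm_le⟩ :=
    exists_pos_le_norm_of_mem_separatedPairs hT (n + 1) Φ'.continuous Φ'.injective
  refine ⟨⟨Φ', Λ', d', min m S.gap, hΛ', lt_min hm0 S.gap_pos,
    (min_le_right _ _).trans S.gap_le_one, fun a b hab => (min_le_left _ _).trans (hm_le a b hab)⟩,
    min_le_right _ _, fun x hx => ?_, ?_⟩
  · change ‖S.map (henon T hT κ hκ0 x) - S.map (T x)‖ ≤ _
    rw [henon_ofReal]
    exact hmap x hx
  · have hlt : ∀ a ∈ Icc (0 : ℝ) 1, ∀ b ∈ Icc (0 : ℝ) 1, a < b →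
        (T a, T b) ∈ separatedPairs T n → ‖pairLog Λ' a b - pairLog S.log (T a) (T b) -
          ε * orderFlip T a b * (Real.pi * Complex.I)‖ ≤ (1 / 2) ^ n := by
      intro a ha b hb hab hsep
      rw [hpair a b hab]
      rcases (ne_of_mem_separatedPairs hsep).lt_or_gt with h | h
      · simpa [orderFlip_of_lt_of_lt hab h] using hlog a ha b hb h hsep
      · rw [S.isDifferenceLog.vecLog_henonCurve_comm hκ hab, pairLog_comm,
          orderFlip_of_lt_of_gt hab h, Int.cast_one, mul_one, add_sub_right_comm,
          add_sub_cancel_right]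
        exact hlog b hb a ha h (separatedPairs_symm hsep)
    intro a ha b hb hsep
    have hab : a ≠ b := fun h => ne_of_mem_separatedPairs hsep (congrArg T h)
    rcases hab.lt_or_gt with h | h
    · exact hlt a ha b hb h hsep
    · rw [pairLog_comm, pairLog_comm S.log, orderFlip_comm]
      exact hlt b hb a ha h (separatedPairs_symm hsep)

lemma nonempty_zero (T : ℝ → ℝ) : Nonempty (Stage T 0) := by
  obtain ⟨Λ, d, hΛ⟩ := exists_isDifferenceLog (Homeomorph.refl ℂ).continuous
    (Homeomorph.refl ℂ).injective
  refine ⟨⟨Homeomorph.refl ℂ, Λ, d, 1, hΛ, one_pos, le_rfl, ?_⟩⟩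
  rintro a b ⟨-, -, i, hi, hsep⟩
  obtain rfl := Nat.le_zero.1 hi
  change 1 ≤ ‖(a : ℂ) - b‖
  rw [← Complex.ofReal_sub, Complex.norm_real,
    Real.norm_eq_abs]
  simpa using hsep

lemma exists_seq_refines (hT : Continuous T)
    {ε : ℕ → ℤ} (hε : ∀ n, ε n = 1 ∨ ε n = -1) :
    ∃ S : ∀ n, Stage T n, ∀ n, (S (n + 1)).Refines (S n) (ε n) := by
  obtain ⟨S₀⟩ := nonempty_zero T
  choose next hnext using fun (n : ℕ) (S : Stage T n) => S.exists_refines hT (hε n)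
  exact ⟨fun n => Nat.rec S₀ next n, fun n => hnext n _⟩

end Stage

/-! ### Pairs of points of the inverse limit -/

/-- The pairs of points that are `1 / (j + 1)`-separated in one of the coordinates `0, …, j`. -/
def farPairs (T : ℝ → ℝ) (j : ℕ) : Set (InvLimit T × InvLimit T) :=
  {p | ∃ i ≤ j, 1 / ((j : ℝ) + 1) ≤ |p.1.1 i - p.2.1 i|}

/-- The pairs of distinct points of the `n`-th arc of the ray, listed in the order of their `n`-th
coordinates. -/
def rayPairs (T : ℝ → ℝ) (c : ℝ) (n : ℕ) : Set (InvLimit T × InvLimit T) :=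
  {p | p.1 ∈ rayArc T c n ∧ p.2 ∈ rayArc T c n ∧ p.1.1 n < p.2.1 n}

/-- `1` if the order of the `i`-th coordinates of a pair of points is opposite to the order of the
coordinates of index `i + 1`, and `0` otherwise. -/
noncomputable def pairFlip {T : ℝ → ℝ} (p : InvLimit T × InvLimit T) (i : ℕ) : ℤ :=
  orderFlip T (p.1.1 (i + 1)) (p.2.1 (i + 1))

/-- The signed number of order reversals between the coordinates `n` and `0` of a pair of points:
the number of half-turns made by the pair when the folds are made to the left or to the right as
prescribed by `ε`. -/
noncomputable def halfTurns {T : ℝ → ℝ} (ε : ℕ → ℤ) (n : ℕ) (p : InvLimit T × InvLimit T) : ℤ :=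
  ∑ i ∈ Finset.range n, ε i * pairFlip p i

section Pairs

variable {T : ℝ → ℝ} {c : ℝ}

lemma mem_separatedPairs_of_mem_farPairs {j n : ℕ} (hjn : j ≤ n) {p : InvLimit T × InvLimit T}
    (h : p ∈ farPairs T j) : (p.1.1 n, p.2.1 n) ∈ separatedPairs T n := by
  obtain ⟨i, hi, hsep⟩ := h
  obtain ⟨k, rfl⟩ := Nat.exists_eq_add_of_le (hi.trans hjn)
  refine ⟨coord_mem_Icc p.1 _, coord_mem_Icc p.2 _, k, Nat.le_add_left _ _, ?_⟩
  rw [iterate_coord_add p.1, iterate_coord_add p.2]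
  exact (Nat.one_div_le_one_div hjn).trans hsep

lemma exists_farPairs_mem_nhds {x y : InvLimit T} (h : x ≠ y) :
    ∃ j, farPairs T j ∈ 𝓝 (x, y) := by
  obtain ⟨i, hi⟩ : ∃ i, x.1 i ≠ y.1 i := Function.ne_iff.1 (Subtype.coe_injective.ne h)
  obtain ⟨j, hj⟩ := exists_nat_one_div_lt (abs_pos.2 (sub_ne_zero.2 hi))
  have hlt : 1 / (((max i j : ℕ) : ℝ) + 1) < |x.1 i - y.1 i| :=
    (Nat.one_div_le_one_div (le_max_right i j)).trans_lt hj
  have hcont : Continuous fun p : InvLimit T × InvLimit T => |p.1.1 i - p.2.1 i| :=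
    (((continuous_coord_s1 i).comp continuous_fst).sub ((continuous_coord_s1 i).comp continuous_snd)).abs
  refine ⟨max i j, mem_of_superset ((isOpen_lt continuous_const hcont).mem_nhds hlt) fun p hp => ?_⟩
  exact ⟨i, le_max_left i j, le_of_lt hp⟩

lemma ne_of_mem_rayPairs {n : ℕ} {p : InvLimit T × InvLimit T} (hp : p ∈ rayPairs T c n) :
    p.1 ≠ p.2 := fun h => hp.2.2.ne (by rw [h])

lemma pairFlip_eq_zero_or_one (p : InvLimit T × InvLimit T) (i : ℕ) :
    pairFlip p i = 0 ∨ pairFlip p i = 1 := orderFlip_eq_zero_or_one _ _ _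

lemma abs_halfTurns_le {ε : ℕ → ℤ} (hε : ∀ n, ε n = 1 ∨ ε n = -1)
    (p : InvLimit T × InvLimit T) (n : ℕ) : |halfTurns ε n p| ≤ n := by
  have hone : ∀ i, |ε i * pairFlip p i| ≤ 1 := fun i => by
    rcases hε i with h | h <;> rcases pairFlip_eq_zero_or_one p i with h' | h' <;> simp [h, h']
  have hsum : ∑ i ∈ Finset.range n, |ε i * pairFlip p i| ≤ n := by
    simpa using Finset.sum_le_card_nsmul (Finset.range n) _ 1 fun i _ => hone i
  exact (Finset.abs_sum_le_sum_abs _ _).trans hsum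

namespace HasProperCore

lemma rayPairs_mono (h : HasProperCore T c) : Monotone (rayPairs T c) := by
  rintro n m hnm p ⟨hx, hy, hlt⟩
  obtain ⟨k, rfl⟩ := Nat.exists_eq_add_of_le hnm
  exact ⟨rayArc_mono T c hnm hx, rayArc_mono T c hnm hy,
    (h.unimodal.coord_lt_coord_iff_of_mem_rayArc hx hy k).2 hlt⟩

lemma isPreconnected_rayPairs (h : HasProperCore T c) (n : ℕ) :
    IsPreconnected (rayPairs T c n) := by
  obtain ⟨b, hb, hsec, hinv⟩ := h.exists_raySection n
  have hconv : Convex ℝ ((Icc 0 (T c) ×ˢ Icc 0 (T c)) ∩ {p : ℝ × ℝ | p.1 - p.2 < 0}) :=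
    ((convex_Icc _ _).prod (convex_Icc _ _)).inter <|
      convex_halfSpace_lt (LinearMap.fst ℝ ℝ ℝ - LinearMap.snd ℝ ℝ ℝ).isLinear 0
  have himage : rayPairs T c n = (fun p : ℝ × ℝ => (b p.1, b p.2)) ''
      ((Icc 0 (T c) ×ˢ Icc 0 (T c)) ∩ {p : ℝ × ℝ | p.1 - p.2 < 0}) := by
    ext ⟨x, y⟩
    constructor
    · rintro ⟨hx, hy, hlt⟩
      exact ⟨(x.1 n, y.1 n), ⟨⟨h.coord_mem_Icc x n, h.coord_mem_Icc y n⟩, sub_neg.2 hlt⟩,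
        Prod.ext (hinv x hx) (hinv y hy)⟩
    · rintro ⟨⟨u, v⟩, ⟨⟨hu, hv⟩, hlt⟩, heq⟩
      obtain ⟨rfl, rfl⟩ := Prod.mk.inj heq
      refine ⟨(hsec u hu).1, (hsec v hv).1, ?_⟩
      rw [(hsec u hu).2, (hsec v hv).2]
      exact sub_neg.1 hlt
  rw [himage]
  exact hconv.isPreconnected.image _ (by fun_prop)

lemma pairFlip_eq_zero (h : HasProperCore T c) {n m : ℕ} {p : InvLimit T × InvLimit T}
    (hp : p ∈ rayPairs T c n) (hnm : n ≤ m) : pairFlip p m = 0 := by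
  refine orderFlip_of_lt_of_lt (h.rayPairs_mono (Nat.le_succ_of_le hnm) hp).2.2 ?_
  rw [apply_coord_succ p.1, apply_coord_succ p.2]
  exact (h.rayPairs_mono hnm hp).2.2

lemma halfTurns_eq (h : HasProperCore T c) (ε : ℕ → ℤ) {n m : ℕ} {p : InvLimit T × InvLimit T}
    (hp : p ∈ rayPairs T c n) (hnm : n ≤ m) : halfTurns ε m p = halfTurns ε n p := by
  refine (Finset.sum_subset (Finset.range_mono hnm) fun i _ hi => ?_).symm
  rw [h.pairFlip_eq_zero hp (by simpa using hi), mul_zero]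

end HasProperCore

end Pairs

/-! ### The embeddings -/

/-- `g` embeds the inverse limit in the plane, and `ℓ` is a logarithm of the differences of `g`
along the ray, whose imaginary part is within bounded distance of the angle prescribed by the
signs `ε`. -/
structure IsTurningEmbedding (T : ℝ → ℝ) (c : ℝ) (ε : ℕ → ℤ) (g : InvLimit T → ℂ)
    (ℓ : InvLimit T × InvLimit T → ℂ) : Prop where
  continuous : Continuous g
  injective : Function.Injective g
  continuousOn_log : ∀ n, ContinuousOn ℓ (rayPairs T c n)
  exp_log : ∀ n, ∀ p ∈ rayPairs T c n, Complex.exp (ℓ p) = g p.2 - g p.1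
  exists_abs_im_log_sub_le : ∀ j, ∃ B : ℝ, ∀ n, ∀ p ∈ rayPairs T c n, p ∈ farPairs T j →
    |(ℓ p).im - Real.pi * halfTurns ε n p| ≤ B

lemma dist_le_two_mul_of_geometric {α : Type*} [PseudoMetricSpace α] {u : ℕ → α} {a : α} {n : ℕ}
    {C : ℝ} (hu : ∀ k, dist (u (n + k)) (u (n + k + 1)) ≤ C * (1 / 2) ^ k)
    (ha : Tendsto u atTop (𝓝 a)) : dist (u n) a ≤ 2 * C := by
  have hshift : Tendsto (fun k => u (n + k)) atTop (𝓝 a) :=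
    ha.comp (tendsto_add_atTop_nat n |>.congr fun k => add_comm k n)
  have hdist := dist_le_of_le_geometric_of_tendsto₀ (1 / 2) C (by norm_num) hu hshift
  rwa [add_zero, show C / (1 - 1 / 2) = 2 * C by ring] at hdist

lemma exists_tendsto_of_geometric {α : Type*} [PseudoMetricSpace α] [CompleteSpace α] {u : ℕ → α}
    {n : ℕ} {C : ℝ} (hu : ∀ k, dist (u (n + k)) (u (n + k + 1)) ≤ C * (1 / 2) ^ k) :
    ∃ a, Tendsto u atTop (𝓝 a) := by
  obtain ⟨a, ha⟩ := cauchySeq_tendsto_of_complete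
    (cauchySeq_of_le_geometric (1 / 2) C (by norm_num) hu)
  refine ⟨a, (tendsto_add_atTop_iff_nat n).1 ?_⟩
  simpa only [add_comm] using ha

namespace Stage

variable {T : ℝ → ℝ} {c : ℝ} {ε : ℕ → ℤ}

/-- The map of the `n`-th stage, applied to the `n`-th coordinate. -/
noncomputable def coordMap (S : ∀ n, Stage T n) (n : ℕ) (x : InvLimit T) : ℂ := (S n).map (x.1 n)

/-- The difference logarithm of the `n`-th stage, applied to the `n`-th coordinates. -/
noncomputable def coordLog (S : ∀ n, Stage T n) (n : ℕ) (p : InvLimit T × InvLimit T) : ℂ :=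
  pairLog (S n).log (p.1.1 n) (p.2.1 n)

variable {S : ∀ n, Stage T n}

lemma continuous_coordMap (n : ℕ) : Continuous (coordMap S n) :=
  (S n).map.continuous.comp (Complex.continuous_ofReal.comp (continuous_coord_s1 n))

lemma gap_le_dist_coordMap {j : ℕ} {p : InvLimit T × InvLimit T} (hp : p ∈ farPairs T j) :
    (S j).gap ≤ dist (coordMap S j p.1) (coordMap S j p.2) := by
  rw [dist_eq_norm]
  exact (S j).gap_le_norm _ _ (mem_separatedPairs_of_mem_farPairs le_rfl hp)

lemma dist_coordMap_succ_le (hS : ∀ n, (S (n + 1)).Refines (S n) (ε n)) (n k : ℕ)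
    (x : InvLimit T) : dist (coordMap S (n + k) x) (coordMap S (n + k + 1) x) ≤
      (1 / 2) ^ (n + 3) * (S n).gap * (1 / 2) ^ k := by
  have hgap : Antitone fun n => (S n).gap := antitone_nat_of_succ_le fun n => (hS n).gap_le
  have hstep := (hS (n + k)).norm_map_sub_le _ (coord_mem_Icc x (n + k + 1))
  rw [apply_coord_succ x, ← dist_eq_norm, dist_comm] at hstep
  calc _ ≤ (1 / 2) ^ (n + k + 3) * (S (n + k)).gap := hstep
    _ ≤ (1 / 2) ^ (n + k + 3) * (S n).gap := by gcongr; exact hgap (Nat.le_add_right n k)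
    _ = _ := by ring

lemma exists_limit_coordMap (hS : ∀ n, (S (n + 1)).Refines (S n) (ε n)) :
    ∃ g : InvLimit T → ℂ, (∀ x, Tendsto (fun n => coordMap S n x) atTop (𝓝 (g x))) ∧
      ∀ n x, dist (coordMap S n x) (g x) ≤ (1 / 2) ^ (n + 2) * (S n).gap := by
  choose g hg using fun x => exists_tendsto_of_geometric
    (u := fun n => coordMap S n x) (dist_coordMap_succ_le hS 0 · x)
  refine ⟨g, hg, fun n x => ?_⟩
  refine (dist_le_two_mul_of_geometric (u := fun n => coordMap S n x)
    (dist_coordMap_succ_le hS n · x) (hg x)).trans_eq ?_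
  ring

lemma continuous_limit_coordMap {g : InvLimit T → ℂ}
    (hg : ∀ n x, dist (coordMap S n x) (g x) ≤ (1 / 2) ^ (n + 2) * (S n).gap) : Continuous g := by
  refine continuous_of_uniform_approx_of_continuous fun u hu => ?_
  obtain ⟨δ, hδ, hu⟩ := Metric.mem_uniformity_dist.1 hu
  obtain ⟨n, hn⟩ := exists_pow_lt_of_lt_one hδ one_half_lt_one
  refine ⟨coordMap S n, continuous_coordMap n, fun x => hu ?_⟩
  rw [dist_comm]
  calc _ ≤ (1 / 2) ^ (n + 2) * (S n).gap := hg n x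
    _ ≤ (1 / 2) ^ n * 1 :=
      mul_le_mul (pow_le_pow_of_le_one (by norm_num) (by norm_num) (Nat.le_add_right n 2))
        (S n).gap_le_one (S n).gap_pos.le (by positivity)
    _ < δ := by rwa [mul_one]

lemma injective_limit_coordMap {g : InvLimit T → ℂ}
    (hg : ∀ n x, dist (coordMap S n x) (g x) ≤ (1 / 2) ^ (n + 2) * (S n).gap) :
    Function.Injective g := by
  intro x y hxy
  by_contra hne
  obtain ⟨j, hj⟩ := exists_farPairs_mem_nhds hne
  have hquarter : ∀ x, dist (coordMap S j x) (g x) ≤ 1 / 4 * (S j).gap := fun x =>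
    (hg j x).trans <| mul_le_mul_of_nonneg_right (by
      rw [pow_add]
      linarith [pow_le_one₀ (n := j) (show (0 : ℝ) ≤ 1 / 2 by norm_num) (by norm_num)])
      (S j).gap_pos.le
  have hgap : (S j).gap ≤ dist (coordMap S j x) (coordMap S j y) :=
    gap_le_dist_coordMap (mem_of_mem_nhds hj)
  have htri := dist_triangle_right (coordMap S j x) (coordMap S j y) (g x)
  have hy := hquarter y
  rw [← hxy] at hy
  linarith [hquarter x, (S j).gap_pos]

lemma continuousOn_coordLog (h : HasProperCore T c) {n m : ℕ} (hnm : n ≤ m) :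
    ContinuousOn (coordLog S m) (rayPairs T c n) := by
  have hcoord : Continuous fun p : InvLimit T × InvLimit T => (p.1.1 m, p.2.1 m) :=
    ((continuous_coord_s1 m).comp continuous_fst).prodMk ((continuous_coord_s1 m).comp continuous_snd)
  exact (continuousOn_pairLog (S m).isDifferenceLog.continuous).comp hcoord.continuousOn
    fun p hp => (h.rayPairs_mono hnm hp).2.2.ne

lemma norm_coordLog_succ_sub_le (hS : ∀ n, (S (n + 1)).Refines (S n) (ε n)) {j m : ℕ}
    (hjm : j ≤ m) {p : InvLimit T × InvLimit T} (hp : p ∈ farPairs T j) :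
    ‖coordLog S (m + 1) p - coordLog S m p - (ε m * pairFlip p m : ℤ) * (Real.pi * Complex.I)‖ ≤
      (1 / 2) ^ m := by
  have hsep := mem_separatedPairs_of_mem_farPairs hjm hp
  rw [← apply_coord_succ p.1, ← apply_coord_succ p.2] at hsep
  have hstep := (hS m).norm_pairLog_sub_le _ (coord_mem_Icc p.1 _) _ (coord_mem_Icc p.2 _) hsep
  rw [apply_coord_succ p.1, apply_coord_succ p.2] at hstep
  rw [Int.cast_mul]
  exact hstep

lemma dist_coordLog_succ_le (h : HasProperCore T c) (hS : ∀ n, (S (n + 1)).Refines (S n) (ε n))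
    {n j m : ℕ} (hnm : n ≤ m) (hjm : j ≤ m) {p : InvLimit T × InvLimit T}
    (hp : p ∈ rayPairs T c n) (hpj : p ∈ farPairs T j) (k : ℕ) :
    dist (coordLog S (m + k) p) (coordLog S (m + k + 1) p) ≤ (1 / 2) ^ m * (1 / 2) ^ k := by
  have hstep := norm_coordLog_succ_sub_le hS (Nat.le_add_right_of_le hjm : j ≤ m + k) hpj
  rw [h.pairFlip_eq_zero hp (Nat.le_add_right_of_le hnm), mul_zero, Int.cast_zero, zero_mul,
    sub_zero] at hstep
  rwa [dist_comm, dist_eq_norm, ← pow_add]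

lemma exists_limit_coordLog (h : HasProperCore T c)
    (hS : ∀ n, (S (n + 1)).Refines (S n) (ε n)) :
    ∃ ℓ : InvLimit T × InvLimit T → ℂ, ∀ n, ∀ p ∈ rayPairs T c n,
      Tendsto (fun m => coordLog S m p) atTop (𝓝 (ℓ p)) := by
  have hexists : ∀ p : InvLimit T × InvLimit T, ∃ a, ∀ n, p ∈ rayPairs T c n →
      Tendsto (fun m => coordLog S m p) atTop (𝓝 a) := fun p => by
    by_cases hp : ∃ n, p ∈ rayPairs T c n
    · obtain ⟨n, hp⟩ := hp
      obtain ⟨j, hj⟩ := exists_farPairs_mem_nhds (ne_of_mem_rayPairs hp)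
      obtain ⟨a, ha⟩ := exists_tendsto_of_geometric (u := fun m => coordLog S m p)
        (dist_coordLog_succ_le h hS (le_max_left n j) (le_max_right n j) hp (mem_of_mem_nhds hj))
      exact ⟨a, fun _ _ => ha⟩
    · exact ⟨0, fun n hn => absurd ⟨n, hn⟩ hp⟩
  choose ℓ hℓ using hexists
  exact ⟨ℓ, fun n p hp => hℓ p n hp⟩

lemma dist_coordLog_limit_le (h : HasProperCore T c)
    (hS : ∀ n, (S (n + 1)).Refines (S n) (ε n)) {n j m : ℕ} (hnm : n ≤ m) (hjm : j ≤ m)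
    {p : InvLimit T × InvLimit T} (hp : p ∈ rayPairs T c n) (hpj : p ∈ farPairs T j) {a : ℂ}
    (ha : Tendsto (fun m => coordLog S m p) atTop (𝓝 a)) :
    dist (coordLog S m p) a ≤ 2 * (1 / 2) ^ m :=
  dist_le_two_mul_of_geometric (u := fun m => coordLog S m p)
    (dist_coordLog_succ_le h hS hnm hjm hp hpj) ha

lemma continuousOn_limit_coordLog (h : HasProperCore T c)
    (hS : ∀ n, (S (n + 1)).Refines (S n) (ε n)) {n : ℕ} {ℓ : InvLimit T × InvLimit T → ℂ}
    (hℓ : ∀ p ∈ rayPairs T c n, Tendsto (fun m => coordLog S m p) atTop (𝓝 (ℓ p))) :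
    ContinuousOn ℓ (rayPairs T c n) := fun p hp => by
  obtain ⟨j, hj⟩ := exists_farPairs_mem_nhds (ne_of_mem_rayPairs hp)
  refine continuousWithinAt_of_locally_uniform_approx_of_continuousWithinAt hp fun u hu => ?_
  obtain ⟨δ, hδ, hu⟩ := Metric.mem_uniformity_dist.1 hu
  obtain ⟨k, hk⟩ := exists_pow_lt_of_lt_one (half_pos hδ) one_half_lt_one
  have hnm : n ≤ k + n + j := by omega
  have hpow : (1 / 2 : ℝ) ^ (k + n + j) ≤ (1 / 2) ^ k :=
    pow_le_pow_of_le_one (by norm_num) (by norm_num) (by omega)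
  refine ⟨_, inter_mem_nhdsWithin _ hj, coordLog S (k + n + j), continuousOn_coordLog h hnm p hp,
    fun q hq => hu ?_⟩
  have hdist := dist_coordLog_limit_le h hS hnm (Nat.le_add_left j _) hq.1 hq.2 (hℓ q hq.1)
  rw [dist_comm]
  linarith

lemma norm_coordLog_add_sub_le (hS : ∀ n, (S (n + 1)).Refines (S n) (ε n)) {j : ℕ}
    {p : InvLimit T × InvLimit T} (hp : p ∈ farPairs T j) (k : ℕ) :
    ‖coordLog S (j + k) p - coordLog S j p -
      (halfTurns ε (j + k) p - halfTurns ε j p : ℤ) * (Real.pi * Complex.I)‖ ≤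
        2 - 2 * (1 / 2) ^ k := by
  induction k with
  | zero => simp
  | succ k ih =>
    have hstep := norm_coordLog_succ_sub_le hS (Nat.le_add_right j k) hp
    have hpow : (1 / 2 : ℝ) ^ (j + k) ≤ (1 / 2) ^ k :=
      pow_le_pow_of_le_one (by norm_num) (by norm_num) (Nat.le_add_left k j)
    have hturns : halfTurns ε (j + (k + 1)) p =
        halfTurns ε (j + k) p + ε (j + k) * pairFlip p (j + k) := Finset.sum_range_succ _ _
    calc _ = ‖(coordLog S (j + k) p - coordLog S j p -
            (halfTurns ε (j + k) p - halfTurns ε j p : ℤ) * (Real.pi * Complex.I)) +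
          (coordLog S (j + k + 1) p - coordLog S (j + k) p -
            (ε (j + k) * pairFlip p (j + k) : ℤ) * (Real.pi * Complex.I))‖ := by
          rw [hturns, ← add_assoc j k 1]
          push_cast
          ring_nf
      _ ≤ _ := norm_add_le_of_le ih hstep
      _ ≤ _ := by rw [pow_succ]; linarith

lemma exists_abs_im_limit_coordLog_sub_le (h : HasProperCore T c) (hT : Continuous T)
    (hε : ∀ n, ε n = 1 ∨ ε n = -1) (hS : ∀ n, (S (n + 1)).Refines (S n) (ε n))
    {ℓ : InvLimit T × InvLimit T → ℂ}
    (hℓ : ∀ n, ∀ p ∈ rayPairs T c n, Tendsto (fun m => coordLog S m p) atTop (𝓝 (ℓ p))) (j : ℕ) :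
    ∃ B : ℝ, ∀ n, ∀ p ∈ rayPairs T c n, p ∈ farPairs T j →
      |(ℓ p).im - Real.pi * halfTurns ε n p| ≤ B := by
  obtain ⟨B, hB⟩ := (isCompact_separatedPairs hT j).exists_bound_of_continuousOn
    ((continuousOn_pairLog (S j).isDifferenceLog.continuous).mono
      fun _ hq => ne_of_mem_separatedPairs hq)
  refine ⟨2 + 2 + B + Real.pi * j, fun n p hp hpj => ?_⟩
  have hlimit : ‖ℓ p - coordLog S (j + n) p‖ ≤ 2 := by
    rw [← dist_eq_norm, dist_comm]
    refine (dist_coordLog_limit_le h hS (Nat.le_add_left n j) (Nat.le_add_right j n) hp hpj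
      (hℓ n p hp)).trans ?_
    linarith [pow_le_one₀ (n := j + n) (show (0 : ℝ) ≤ 1 / 2 by norm_num) (by norm_num)]
  have hturns := norm_coordLog_add_sub_le hS hpj n
  rw [h.halfTurns_eq ε hp (Nat.le_add_left n j)] at hturns
  have hstart : ‖coordLog S j p‖ ≤ B := hB _ (mem_separatedPairs_of_mem_farPairs le_rfl hpj)
  have hshort : ‖(halfTurns ε j p : ℂ) * (Real.pi * Complex.I)‖ ≤ Real.pi * j := by
    rw [norm_mul, norm_mul, Complex.norm_I, mul_one, Complex.norm_real, Complex.norm_intCast,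
      Real.norm_of_nonneg Real.pi_pos.le, mul_comm]
    gcongr
    exact_mod_cast abs_halfTurns_le hε p j
  have hnorm : ‖ℓ p - halfTurns ε n p * (Real.pi * Complex.I)‖ ≤ 2 + 2 + B + Real.pi * j := by
    calc _ = ‖(ℓ p - coordLog S (j + n) p) + (coordLog S (j + n) p - coordLog S j p -
            (halfTurns ε n p - halfTurns ε j p : ℤ) * (Real.pi * Complex.I)) +
          coordLog S j p - halfTurns ε j p * (Real.pi * Complex.I)‖ := by
          push_cast
          ring_nf
      _ ≤ _ := norm_sub_le_of_le (norm_add_le_of_le (norm_add_le_of_le hlimit (hturns.trans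
        (sub_le_self _ (by positivity)))) hstart) hshort
  refine le_trans (le_of_eq ?_) ((Complex.abs_im_le_norm _).trans hnorm)
  simp [mul_comm]

end Stage

lemma HasProperCore.exists_isTurningEmbedding {T : ℝ → ℝ} {c : ℝ} (h : HasProperCore T c)
    (hT : Continuous T) {ε : ℕ → ℤ} (hε : ∀ n, ε n = 1 ∨ ε n = -1) :
    ∃ g ℓ, IsTurningEmbedding T c ε g ℓ := by
  obtain ⟨S, hS⟩ := Stage.exists_seq_refines hT hε
  obtain ⟨g, hg, hdist⟩ := Stage.exists_limit_coordMap hS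
  obtain ⟨ℓ, hℓ⟩ := Stage.exists_limit_coordLog h hS
  refine ⟨g, ℓ, Stage.continuous_limit_coordMap hdist, Stage.injective_limit_coordMap hdist,
    fun n => Stage.continuousOn_limit_coordLog h hS (hℓ n), fun n p hp => ?_,
    Stage.exists_abs_im_limit_coordLog_sub_le h hT hε hS hℓ⟩
  refine tendsto_nhds_unique ((Complex.continuous_exp.tendsto _).comp (hℓ n p hp)) ?_
  refine ((hg p.2).sub (hg p.1)).congr' ?_
  filter_upwards [eventually_ge_atTop n] with m hm
  exact ((S m).isDifferenceLog.exp_pairLog (h.rayPairs_mono hm hp).2.2).symm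

/-! ### Comparison of two embeddings -/

section Compare

variable {T : ℝ → ℝ} {c : ℝ}

lemma abs_sub_mul_comm_of_eq_one_or_neg_one {d : ℤ} (hd : d = 1 ∨ d = -1) (x y : ℝ) :
    |x - d * y| = |y - d * x| := by
  rcases hd with rfl | rfl
  · simp [abs_sub_comm]
  · simp [add_comm]

lemma abs_two_mul_mul_sub_le {d s s' t n C : ℝ} (hs : |t - d * s| ≤ C) (hs' : |2 * t - s'| ≤ n) :
    |2 * d * s - s'| ≤ n + 2 * C := by
  rw [abs_le] at *
  constructor <;> linarith

lemma exists_homeomorph_of_image_range_eq {X Y Z W : Type*} [TopologicalSpace X]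
    [TopologicalSpace Y] [TopologicalSpace Z] [TopologicalSpace W] {g : X → Z} {g' : Y → W}
    (hg : IsEmbedding g) (hg' : IsEmbedding g') (H : Z ≃ₜ W) (hH : H '' range g = range g') :
    ∃ φ : X ≃ₜ Y, ∀ x, g' (φ x) = H (g x) := by
  refine ⟨(hg.toHomeomorph.trans (H.image _)).trans
    ((Homeomorph.setCongr hH).trans hg'.toHomeomorph.symm), fun x => ?_⟩
  exact congrArg Subtype.val (hg'.toHomeomorph.apply_symm_apply _)

lemma farPairs_mono (T : ℝ → ℝ) : Monotone (farPairs T) := by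
  rintro j k hjk p ⟨i, hi, hsep⟩
  exact ⟨i, hi.trans hjk, (Nat.one_div_le_one_div hjk).trans hsep⟩

lemma ne_of_mem_farPairs {j : ℕ} {p : InvLimit T × InvLimit T} (hp : p ∈ farPairs T j) :
    p.1 ≠ p.2 := by
  obtain ⟨i, -, hsep⟩ := hp
  intro h
  rw [h, sub_self, abs_zero] at hsep
  exact absurd hsep (not_le.2 Nat.one_div_pos_of_nat)

lemma isCompact_farPairs [CompactSpace (InvLimit T)] (j : ℕ) : IsCompact (farPairs T j) := by
  have hunion : farPairs T j = ⋃ i ∈ Iic j,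
      {p : InvLimit T × InvLimit T | 1 / ((j : ℝ) + 1) ≤ |p.1.1 i - p.2.1 i|} := by
    ext p
    simp only [farPairs, mem_ofPred_eq, mem_iUnion, mem_Iic, exists_prop]
  rw [hunion]
  exact ((finite_Iic j).isClosed_biUnion fun i _ => isClosed_le continuous_const
    (((continuous_coord_s1 i).comp continuous_fst).sub
      ((continuous_coord_s1 i).comp continuous_snd)).abs).isCompact

lemma exists_mapsTo_farPairs [CompactSpace (InvLimit T)] {φ : InvLimit T → InvLimit T}
    (hφ : Continuous φ) (hinj : Function.Injective φ) (j : ℕ) :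
    ∃ k, MapsTo (Prod.map φ φ) (farPairs T j) (farPairs T k) := by
  refine (isCompact_farPairs j).induction_on (p := fun s => ∃ k, MapsTo (Prod.map φ φ) s
    (farPairs T k)) ⟨0, mapsTo_empty _ _⟩ (fun s t hst ⟨k, hk⟩ => ⟨k, hk.mono_left hst⟩) ?_ ?_
  · rintro s t ⟨k, hk⟩ ⟨l, hl⟩
    exact ⟨max k l, (hk.mono_right (farPairs_mono T (le_max_left k l))).union
      (hl.mono_right (farPairs_mono T (le_max_right k l)))⟩
  · intro p hp
    obtain ⟨k, hk⟩ := exists_farPairs_mem_nhds (hinj.ne (ne_of_mem_farPairs hp))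
    exact ⟨_, mem_nhdsWithin_of_mem_nhds ((hφ.prodMap hφ).continuousAt hk), k, fun q hq => hq⟩

lemma abs_two_mul_halfTurns_sub_le {ε : ℕ → ℤ} (hε : ∀ n, ε n = 1 ∨ ε n = -1)
    (p : InvLimit T × InvLimit T) (n : ℕ) :
    |2 * (halfTurns ε n p : ℝ) - (∑ i ∈ Finset.range n, ε i : ℤ)| ≤ n := by
  suffices h : |2 * halfTurns ε n p - ∑ i ∈ Finset.range n, ε i| ≤ n by exact_mod_cast h
  have hone : ∀ i, |2 * (ε i * pairFlip p i) - ε i| ≤ 1 := fun i => by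
    rcases hε i with h | h <;> rcases pairFlip_eq_zero_or_one p i with h' | h' <;> simp [h, h']
  have hsum : ∑ i ∈ Finset.range n, |2 * (ε i * pairFlip p i) - ε i| ≤ n := by
    simpa using Finset.sum_le_card_nsmul (Finset.range n) _ 1 fun i _ => hone i
  rw [halfTurns, Finset.mul_sum, ← Finset.sum_sub_distrib]
  exact (Finset.abs_sum_le_sum_abs _ _).trans hsum

namespace HasProperCore

lemma nonempty_rayPairs (h : HasProperCore T c) (n : ℕ) : (rayPairs T c n).Nonempty := by
  obtain ⟨b, -, hb, -⟩ := h.exists_raySection n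
  have hzero := hb 0 ⟨le_rfl, h.apply_crit_pos.le⟩
  have htop := hb (T c) ⟨h.apply_crit_pos.le, le_rfl⟩
  refine ⟨(b 0, b (T c)), hzero.1, htop.1, ?_⟩
  rw [hzero.2, htop.2]
  exact h.apply_crit_pos

lemma exists_mapsTo_rayPairs (h : HasProperCore T c) (φ : InvLimit T ≃ₜ InvLimit T) (n m : ℕ) :
    ∃ k ≥ m, MapsTo (Prod.map φ φ) (rayPairs T c n) (rayPairs T c k) := by
  obtain ⟨k, hmaps, hlt⟩ := h.exists_mapsTo_rayArc_and_coord_lt φ n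
  exact ⟨max m k, le_max_left m k, fun p hp => h.rayPairs_mono (le_max_right m k)
    ⟨hmaps hp.1, hmaps hp.2.1, hlt _ hp.1 _ hp.2.1 hp.2.2⟩⟩

lemma mem_rayArc_of_coord_le (h : HasProperCore T c) {n k : ℕ} {x y : InvLimit T}
    (hy : y ∈ rayArc T c n) (hx : x ∈ rayArc T c (n + k)) (hxy : x.1 (n + k) ≤ y.1 (n + k)) :
    x ∈ rayArc T c n := by
  induction k with
  | zero => exact hx
  | succ k ih =>
    have hyc : y.1 (n + k + 1) ≤ c := hy _ (by omega)
    have hxc : x.1 (n + k + 1) ≤ c := le_trans hxy hyc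
    refine ih (fun m hm => ?_) ?_
    · rcases (Nat.succ_le_of_lt hm).eq_or_lt with rfl | hm
      · exact hxc
      · exact hx m hm
    · rw [← apply_coord_succ x, ← apply_coord_succ y]
      exact h.unimodal.strictMonoOn.monotoneOn ⟨coord_nonneg x _, hxc⟩ ⟨coord_nonneg y _, hyc⟩ hxy

lemma mem_rayPairs_of_coord_le (h : HasProperCore T c) {n m : ℕ} (hnm : n ≤ m)
    {p : InvLimit T × InvLimit T} {y : InvLimit T} (hp : p ∈ rayPairs T c m)
    (hy : y ∈ rayArc T c n) (hle : p.2.1 m ≤ y.1 m) : p ∈ rayPairs T c n := by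
  obtain ⟨k, rfl⟩ := Nat.exists_eq_add_of_le hnm
  have hfst := h.mem_rayArc_of_coord_le hy hp.1 (hp.2.2.le.trans hle)
  have hsnd := h.mem_rayArc_of_coord_le hy hp.2.1 hle
  exact ⟨hfst, hsnd, (h.unimodal.coord_lt_coord_iff_of_mem_rayArc hfst hsnd k).1 hp.2.2⟩

-- A homeomorphism is monotone along the ray, so either it or its inverse moves `p.2` backwards.
lemma map_mem_rayPairs_or_symm (h : HasProperCore T c) (φ : InvLimit T ≃ₜ InvLimit T) {n : ℕ}
    {p : InvLimit T × InvLimit T} (hp : p ∈ rayPairs T c n) :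
    Prod.map φ φ p ∈ rayPairs T c n ∨ Prod.map φ.symm φ.symm p ∈ rayPairs T c n := by
  obtain ⟨m, hnm, hm⟩ := h.exists_mapsTo_rayPairs φ n n
  have hφp := hm hp
  rcases le_or_gt ((φ p.2).1 m) (p.2.1 m) with hle | hlt
  · exact Or.inl (h.mem_rayPairs_of_coord_le hnm hφp hp.2.1 hle)
  · have hforward : (p.2, φ p.2) ∈ rayPairs T c m :=
      ⟨rayArc_mono T c hnm hp.2.1, hφp.2.1, hlt⟩
    obtain ⟨k, hmk, hk⟩ := h.exists_mapsTo_rayPairs φ.symm m m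
    have hback := (hk hforward).2.2
    rw [Prod.map_snd, φ.symm_apply_apply] at hback
    exact Or.inr (h.mem_rayPairs_of_coord_le (hnm.trans hmk) (hk (h.rayPairs_mono hnm hp)) hp.2.1
      hback.le)

-- The two points follow the orbit of period two `u ↦ T u ↦ u`, which straddles `c`, in opposite
-- phases from the `n`-th coordinate on downwards.
lemma exists_forall_pairFlip_eq_one (h : HasProperCore T c) :
    ∃ j, ∀ n, ∃ p ∈ rayPairs T c n, p ∈ farPairs T j ∧ ∀ i < n, pairFlip p i = 1 := by
  obtain ⟨u, ⟨hu, huc⟩, hcu, huu⟩ := h.exists_two_periodic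
  have hlt : u < T u := huc.trans hcu
  obtain ⟨j, hj⟩ := exists_nat_one_div_lt (sub_pos.2 hlt)
  refine ⟨j, fun n => ?_⟩
  have huI : u ∈ Icc 0 (T c) := ⟨hu.le, (huc.trans h.lt_apply_crit).le⟩
  have hpoint : ∀ m, ∃ x ∈ rayArc T c m, x.1 m = u := fun m => by
    obtain ⟨b, -, hb, -⟩ := h.exists_raySection m
    exact ⟨b u, hb u huI⟩
  obtain ⟨x, hx, hxn⟩ := hpoint n
  obtain ⟨y, hy, hyn⟩ := hpoint (n + 1)
  have hyn' : y.1 n = T u := by rw [← apply_coord_succ y, hyn]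
  have hphase : ∀ k i, i + k = n → (x.1 i = u ∧ y.1 i = T u) ∨ (x.1 i = T u ∧ y.1 i = u) := by
    intro k
    induction k with
    | zero => rintro i rfl; exact Or.inl ⟨hxn, hyn'⟩
    | succ k ih =>
      intro i hi
      rw [← apply_coord_succ x i, ← apply_coord_succ y i]
      rcases ih (i + 1) (by omega) with ⟨hxi, hyi⟩ | ⟨hxi, hyi⟩
      · exact Or.inr ⟨by rw [hxi], by rw [hyi, huu]⟩
      · exact Or.inl ⟨by rw [hxi, huu], by rw [hyi]⟩
  refine ⟨(x, y), ⟨hx, fun m hm => ?_, ?_⟩, ⟨0, Nat.zero_le j, ?_⟩, fun i hi => ?_⟩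
  · rcases (Nat.succ_le_of_lt hm).eq_or_lt with rfl | hm
    · exact hyn.trans_le huc.le
    · exact hy m hm
  · rwa [hxn, hyn']
  · rcases hphase n 0 (zero_add n) with ⟨hx0, hy0⟩ | ⟨hx0, hy0⟩
    · rw [hx0, hy0, abs_sub_comm, abs_of_pos (sub_pos.2 hlt)]
      exact hj.le
    · rw [hx0, hy0, abs_of_pos (sub_pos.2 hlt)]
      exact hj.le
  · rcases hphase (n - (i + 1)) (i + 1) (by omega) with ⟨hxi, hyi⟩ | ⟨hxi, hyi⟩
    · rw [pairFlip, hxi, hyi]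
      exact orderFlip_of_lt_of_gt hlt (by rwa [huu])
    · rw [pairFlip, hxi, hyi, orderFlip_comm]
      exact orderFlip_of_lt_of_gt hlt (by rwa [huu])

end HasProperCore

namespace IsTurningEmbedding

variable {ε ε' : ℕ → ℤ} {g g' : InvLimit T → ℂ} {ℓ ℓ' : InvLimit T × InvLimit T → ℂ}

lemma isEmbedding [CompactSpace (InvLimit T)] (E : IsTurningEmbedding T c ε g ℓ) :
    IsEmbedding g :=
  (E.continuous.isClosedEmbedding E.injective).isEmbedding

lemma exists_int_log_map_eq (h : HasProperCore T c) (E : IsTurningEmbedding T c ε g ℓ)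
    (E' : IsTurningEmbedding T c ε' g' ℓ') {H : ℂ → ℂ} {Λ : ℂ × ℂ → ℂ} {d : ℤ}
    (hΛ : IsDifferenceLog H Λ d) (φ : InvLimit T ≃ₜ InvLimit T)
    (hφ : ∀ x, g' (φ x) = H (g x)) :
    ∃ k : ℤ, ∀ n, ∀ p ∈ rayPairs T c n,
      ℓ' (Prod.map φ φ p) = Λ (g p.1, ℓ p) + k * (2 * Real.pi * Complex.I) := by
  have hn : ∀ n, ∃ k : ℤ, ∀ p ∈ rayPairs T c n,
      ℓ' (Prod.map φ φ p) = Λ (g p.1, ℓ p) + k * (2 * Real.pi * Complex.I) := fun n => by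
    obtain ⟨m, -, hm⟩ := h.exists_mapsTo_rayPairs φ n 0
    refine exists_int_forall_eq_add_of_exp_eq (f := fun p => ℓ' (Prod.map φ φ p))
      (g := fun p => Λ (g p.1, ℓ p)) (h.isPreconnected_rayPairs n) ?_ ?_ fun p hp => ?_
    · exact (E'.continuousOn_log m).comp
        (φ.continuous.prodMap φ.continuous).continuousOn hm
    · exact hΛ.continuous.comp_continuousOn
        ((E.continuous.comp continuous_fst).continuousOn.prodMk (E.continuousOn_log n))
    · rw [E'.exp_log m _ (hm hp), hΛ.exp_eq, E.exp_log n p hp, Prod.map_fst, Prod.map_snd, hφ,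
        hφ, add_sub_cancel]
  choose k hk using hn
  refine ⟨k 0, fun n p hp => ?_⟩
  obtain ⟨q, hq⟩ := h.nonempty_rayPairs 0
  have hcompare := (hk n q (h.rayPairs_mono (Nat.zero_le n) hq)).symm.trans (hk 0 q hq)
  have hkn : (k n : ℂ) = k 0 :=
    mul_right_cancel₀ Complex.two_pi_I_ne_zero (add_left_cancel hcompare)
  rw [hk n p hp, hkn]

lemma exists_re_log_mem_Icc [CompactSpace (InvLimit T)] (E : IsTurningEmbedding T c ε g ℓ)
    (j : ℕ) : ∃ r M : ℝ, ∀ n, ∀ p ∈ rayPairs T c n, p ∈ farPairs T j → (ℓ p).re ∈ Icc r M := by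
  have hg := E.continuous
  have hcont : ContinuousOn (fun p : InvLimit T × InvLimit T => Real.log ‖g p.2 - g p.1‖)
      (farPairs T j) := ContinuousOn.log (by fun_prop) fun p hp =>
    norm_ne_zero_iff.2 (sub_ne_zero.2 (E.injective.ne (ne_of_mem_farPairs hp).symm))
  obtain ⟨B, hB⟩ := (isCompact_farPairs j).exists_bound_of_continuousOn hcont
  refine ⟨-B, B, fun n p hp hpj => ?_⟩
  have hre : Real.log ‖g p.2 - g p.1‖ = (ℓ p).re := by
    rw [← E.exp_log n p hp, Complex.norm_exp, Real.log_exp]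
  rw [← hre]
  exact abs_le.1 (hB p hpj)

lemma exists_abs_im_log_map_sub_le (h : HasProperCore T c) (E : IsTurningEmbedding T c ε g ℓ)
    (E' : IsTurningEmbedding T c ε' g' ℓ') {H : ℂ → ℂ} {Λ : ℂ × ℂ → ℂ} {d : ℤ}
    (hΛ : IsDifferenceLog H Λ d) (φ : InvLimit T ≃ₜ InvLimit T)
    (hφ : ∀ x, g' (φ x) = H (g x)) (j : ℕ) :
    ∃ C : ℝ, ∀ n, ∀ p ∈ rayPairs T c n, p ∈ farPairs T j →
      |(ℓ' (Prod.map φ φ p)).im - d * (ℓ p).im| ≤ C := by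
  have := compactSpace_invLimit h.unimodal.continuousOn
  obtain ⟨k, hk⟩ := exists_int_log_map_eq h E E' hΛ φ hφ
  obtain ⟨r, M, hre⟩ := E.exists_re_log_mem_Icc j
  obtain ⟨C, hC⟩ := hΛ.exists_norm_sub_le (isCompact_range E.continuous) r M
  refine ⟨C + ‖(k : ℂ) * (2 * Real.pi * Complex.I)‖, fun n p hp hpj => ?_⟩
  have hΛp := hC (g p.1) (mem_range_self _) (ℓ p) (hre n p hp hpj).1 (hre n p hp hpj).2
  have hnorm : ‖ℓ' (Prod.map φ φ p) - d * ℓ p‖ ≤ C + ‖(k : ℂ) * (2 * Real.pi * Complex.I)‖ := by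
    rw [hk n p hp, add_sub_right_comm]
    exact norm_add_le_of_le hΛp le_rfl
  simpa using (Complex.abs_im_le_norm _).trans hnorm

lemma exists_abs_halfTurns_map_sub_le (h : HasProperCore T c) (E : IsTurningEmbedding T c ε g ℓ)
    (E' : IsTurningEmbedding T c ε' g' ℓ') {H : ℂ → ℂ} {Λ : ℂ × ℂ → ℂ} {d : ℤ}
    (hd : d = 1 ∨ d = -1) (hΛ : IsDifferenceLog H Λ d) (φ : InvLimit T ≃ₜ InvLimit T)
    (hφ : ∀ x, g' (φ x) = H (g x)) (j : ℕ) :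
    ∃ C : ℝ, ∀ n, ∀ p ∈ rayPairs T c n, p ∈ farPairs T j → Prod.map φ φ p ∈ rayPairs T c n →
      |(halfTurns ε' n (Prod.map φ φ p) : ℝ) - d * halfTurns ε n p| ≤ C := by
  have := compactSpace_invLimit h.unimodal.continuousOn
  obtain ⟨k, hk⟩ := exists_mapsTo_farPairs φ.continuous φ.injective j
  obtain ⟨C, hC⟩ := exists_abs_im_log_map_sub_le h E E' hΛ φ hφ j
  obtain ⟨B, hB⟩ := E.exists_abs_im_log_sub_le j
  obtain ⟨B', hB'⟩ := E'.exists_abs_im_log_sub_le k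
  refine ⟨B' + C + B, fun n p hp hpj hφp => ?_⟩
  set t : ℝ := (halfTurns ε n p : ℝ)
  set t' : ℝ := (halfTurns ε' n (Prod.map φ φ p) : ℝ)
  have habs : |(d : ℝ)| = 1 := by rcases hd with rfl | rfl <;> simp
  have hsource : |d * ((ℓ p).im - Real.pi * t)| ≤ B := by
    rw [abs_mul, habs, one_mul]
    exact hB n p hp hpj
  have htarget := hB' n _ hφp (hk hpj)
  rw [abs_sub_comm] at htarget
  have hlog := hC n p hp hpj
  calc |t' - d * t| ≤ Real.pi * |t' - d * t| :=
        le_mul_of_one_le_left (abs_nonneg _) (by linarith [Real.pi_gt_three])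
    _ = |(Real.pi * t' - (ℓ' (Prod.map φ φ p)).im) + ((ℓ' (Prod.map φ φ p)).im - d * (ℓ p).im) +
          d * ((ℓ p).im - Real.pi * t)| := by
        rw [← abs_of_pos Real.pi_pos, ← abs_mul, abs_of_pos Real.pi_pos]
        ring_nf
    _ ≤ B' + C + B := (abs_add_three _ _ _).trans (add_le_add_three htarget hlog hsource)

lemma exists_abs_two_mul_sum_sub_sum_le (h : HasProperCore T c)
    (E : IsTurningEmbedding T c ε g ℓ) (E' : IsTurningEmbedding T c ε' g' ℓ')
    (hε : ∀ n, ε n = 1 ∨ ε n = -1) (hε' : ∀ n, ε' n = 1 ∨ ε' n = -1) (H : ℂ ≃ₜ ℂ)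
    (hH : H '' range g = range g') :
    ∃ d : ℤ, (d = 1 ∨ d = -1) ∧ ∃ C : ℝ, ∀ n : ℕ,
      |2 * (d : ℝ) * (∑ i ∈ Finset.range n, ε i : ℤ) - (∑ i ∈ Finset.range n, ε' i : ℤ)| ≤
        n + C ∨
      |2 * (d : ℝ) * (∑ i ∈ Finset.range n, ε' i : ℤ) - (∑ i ∈ Finset.range n, ε i : ℤ)| ≤
        n + C := by
  have := compactSpace_invLimit h.unimodal.continuousOn
  obtain ⟨φ, hφ⟩ := exists_homeomorph_of_image_range_eq E.isEmbedding E'.isEmbedding H hH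
  obtain ⟨Λ, d, hΛ⟩ := exists_isDifferenceLog H.continuous H.injective
  have hd := hΛ.degree_eq_one_or_neg_one
  obtain ⟨j, hj⟩ := h.exists_forall_pairFlip_eq_one
  obtain ⟨k, hk⟩ := exists_mapsTo_farPairs φ.symm.continuous φ.symm.injective j
  obtain ⟨C, hC⟩ := exists_abs_halfTurns_map_sub_le h E E' hd hΛ φ hφ j
  obtain ⟨C', hC'⟩ := exists_abs_halfTurns_map_sub_le h E E' hd hΛ φ hφ k
  refine ⟨d, hd, 2 * max C C', fun n => ?_⟩
  obtain ⟨p, hp, hpj, hflip⟩ := hj n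
  have hsum : ∀ ε : ℕ → ℤ, halfTurns ε n p = ∑ i ∈ Finset.range n, ε i := fun ε =>
    Finset.sum_congr rfl fun i hi => by rw [hflip i (Finset.mem_range.1 hi), mul_one]
  rcases h.map_mem_rayPairs_or_symm φ hp with hφp | hφp
  · left
    have hturns := (hC n p hp hpj hφp).trans (le_max_left C C')
    rw [hsum] at hturns
    exact abs_two_mul_mul_sub_le hturns (abs_two_mul_halfTurns_sub_le hε' _ n)
  · right
    have hφφ : Prod.map φ φ (Prod.map φ.symm φ.symm p) = p :=
      Prod.ext (φ.apply_symm_apply _) (φ.apply_symm_apply _)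
    have hturns := (hC' n _ hφp (hk hpj) (hφφ.symm ▸ hp)).trans (le_max_right C C')
    rw [hφφ, hsum, abs_sub_mul_comm_of_eq_one_or_neg_one hd] at hturns
    exact abs_two_mul_mul_sub_le hturns (abs_two_mul_halfTurns_sub_le hε _ n)

end IsTurningEmbedding

end Compare

/-! ### An uncountable family of sign sequences -/

section Signs

open scoped Classical in
/-- The sign of the `k`-th block of the sequence `blockSigns A`. Blocks of even index are positive,
and each `a : ℕ` decides by its membership in `A` the signs of infinitely many blocks of odd
index. -/
noncomputable def blockSign (A : Set ℕ) (k : ℕ) : ℤ :=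
  if Even k ∨ (Nat.unpair (k / 2)).1 ∈ A then 1 else -1

/-- The sequence of signs which is constant on the blocks `10 ^ k ≤ n < 10 ^ (k + 1)`, each of them
much longer than everything that precedes it. -/
noncomputable def blockSigns (A : Set ℕ) (n : ℕ) : ℤ := blockSign A (Nat.log 10 n)

variable {A B : Set ℕ}

lemma blockSign_eq_one_or_neg_one (A : Set ℕ) (k : ℕ) : blockSign A k = 1 ∨ blockSign A k = -1 := by
  classical exact ite_eq_or_eq _ _ _

lemma blockSigns_eq_one_or_neg_one (A : Set ℕ) (n : ℕ) :
    blockSigns A n = 1 ∨ blockSigns A n = -1 := blockSign_eq_one_or_neg_one A _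

lemma blockSign_two_mul (A : Set ℕ) (k : ℕ) : blockSign A (2 * k) = 1 :=
  if_pos (Or.inl (even_two_mul k))

lemma blockSign_two_mul_pair_add_one (A : Set ℕ) (a m : ℕ) :
    blockSign A (2 * Nat.pair a m + 1) = 1 ↔ a ∈ A := by
  have hdiv : (2 * Nat.pair a m + 1) / 2 = Nat.pair a m := by omega
  rw [blockSign, hdiv, Nat.unpair_pair]
  simp

lemma exists_ge_blockSign_eq_neg_mul (hAB : A ≠ B) {d : ℤ} (hd : d = 1 ∨ d = -1) (m : ℕ) :
    ∃ k ≥ m, blockSign A k = -(d * blockSign B k) := by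
  suffices h : ∃ k ≥ m, blockSign A k ≠ d * blockSign B k by
    obtain ⟨k, hk, hne⟩ := h
    refine ⟨k, hk, ?_⟩
    rcases hd with rfl | rfl <;> rcases blockSign_eq_one_or_neg_one A k with hA | hA <;>
      rcases blockSign_eq_one_or_neg_one B k with hB | hB <;> simp_all
  rcases hd with rfl | rfl
  · obtain ⟨a, ha⟩ : ∃ a, ¬(a ∈ A ↔ a ∈ B) := not_forall.1 fun h => hAB (Set.ext h)
    refine ⟨2 * Nat.pair a m + 1, by have := Nat.right_le_pair a m; omega, fun h => ha ?_⟩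
    rw [← blockSign_two_mul_pair_add_one A a m, h, one_mul, blockSign_two_mul_pair_add_one]
  · refine ⟨2 * m, by omega, ?_⟩
    rw [blockSign_two_mul, blockSign_two_mul]
    decide

lemma abs_sum_blockSigns_sub_le (A : Set ℕ) (k : ℕ) :
    |((∑ i ∈ Finset.range (10 ^ (k + 1)), blockSigns A i : ℤ) : ℝ) - 9 * 10 ^ k * blockSign A k| ≤
      10 ^ k := by
  have hle : 10 ^ k ≤ 10 ^ (k + 1) := Nat.pow_le_pow_right (by norm_num) (Nat.le_succ k)
  have hblock : ∑ i ∈ Finset.Ico (10 ^ k) (10 ^ (k + 1)), blockSigns A i =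
      9 * 10 ^ k * blockSign A k := by
    have hconst : ∀ i ∈ Finset.Ico (10 ^ k) (10 ^ (k + 1)), blockSigns A i = blockSign A k :=
      fun i hi => by
        obtain ⟨hki, hik⟩ := Finset.mem_Ico.1 hi
        rw [blockSigns, Nat.log_eq_of_pow_le_of_lt_pow hki hik]
    rw [Finset.sum_congr rfl hconst, Finset.sum_const, Nat.card_Ico, nsmul_eq_mul, Nat.cast_sub hle]
    push_cast
    ring
  have hstart : |∑ i ∈ Finset.range (10 ^ k), blockSigns A i| ≤ 10 ^ k := by
    refine (Finset.abs_sum_le_sum_abs _ _).trans ?_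
    have habs : ∀ i, |blockSigns A i| ≤ 1 := fun i => by
      rcases blockSigns_eq_one_or_neg_one A i with h | h <;> simp [h]
    simpa using Finset.sum_le_card_nsmul (Finset.range (10 ^ k)) _ 1 fun i _ => habs i
  rw [← Finset.sum_range_add_sum_Ico _ hle, hblock]
  push_cast
  rw [add_sub_cancel_right]
  exact_mod_cast hstart

lemma lt_abs_two_mul_mul_sub {d v s t P C : ℝ} (hd : d = 1 ∨ d = -1) (hv : v = 1 ∨ v = -1)
    (hs : |s - 9 * P * -(d * v)| ≤ P) (ht : |t - 9 * P * v| ≤ P) (hC : C < P) :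
    10 * P + C < |2 * d * s - t| := by
  rw [abs_le] at hs ht
  rw [lt_abs]
  rcases hv with rfl | rfl
  · right
    rcases hd with rfl | rfl <;> linarith
  · left
    rcases hd with rfl | rfl <;> linarith

lemma exists_lt_abs_two_mul_sum_blockSigns_sub (hAB : A ≠ B) {d : ℤ} (hd : d = 1 ∨ d = -1)
    (C : ℝ) : ∃ n : ℕ,
      n + C < |2 * (d : ℝ) * (∑ i ∈ Finset.range n, blockSigns A i : ℤ) -
        (∑ i ∈ Finset.range n, blockSigns B i : ℤ)| ∧
      n + C < |2 * (d : ℝ) * (∑ i ∈ Finset.range n, blockSigns B i : ℤ) -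
        (∑ i ∈ Finset.range n, blockSigns A i : ℤ)| := by
  obtain ⟨k, hk, hkAB⟩ := exists_ge_blockSign_eq_neg_mul hAB hd ⌈C⌉₊
  have hCk : C < 10 ^ k := by
    calc C ≤ k := (Nat.le_ceil C).trans (mod_cast hk)
      _ < 10 ^ k := mod_cast Nat.lt_pow_self (by norm_num)
  have hkBA : blockSign B k = -(d * blockSign A k) := by
    rcases hd with rfl | rfl <;> rw [hkAB] <;> ring
  have hunit : ∀ A, (blockSign A k : ℝ) = 1 ∨ (blockSign A k : ℝ) = -1 := fun A =>
    mod_cast blockSign_eq_one_or_neg_one A k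
  have hd' : (d : ℝ) = 1 ∨ (d : ℝ) = -1 := mod_cast hd
  have hA := abs_sum_blockSigns_sub_le A k
  have hB := abs_sum_blockSigns_sub_le B k
  have hpow : ((10 ^ (k + 1) : ℕ) : ℝ) = 10 * 10 ^ k := by
    push_cast
    ring
  refine ⟨10 ^ (k + 1), ?_, ?_⟩
  · rw [hpow]
    refine lt_abs_two_mul_mul_sub hd' (hunit B) ?_ hB hCk
    rw [hkAB] at hA
    exact_mod_cast hA
  · rw [hpow]
    refine lt_abs_two_mul_mul_sub hd' (hunit A) ?_ hA hCk
    rw [hkBA] at hB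
    exact_mod_cast hB

end Signs

/-! ### Non-equivalent embeddings -/

section Family

variable {T T' : ℝ → ℝ} {c : ℝ}

lemma IsTurningEmbedding.not_equivalentEmbeddings (h : HasProperCore T c) {A B : Set ℕ}
    (hAB : A ≠ B) {g g' : InvLimit T → ℂ} {ℓ ℓ' : InvLimit T × InvLimit T → ℂ}
    (E : IsTurningEmbedding T c (blockSigns A) g ℓ)
    (E' : IsTurningEmbedding T c (blockSigns B) g' ℓ') (e : ℂ ≃ₜ ℝ × ℝ) :
    ¬ EquivalentEmbeddings (e ∘ g) (e ∘ g') := by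
  rintro ⟨H, hH⟩
  rw [range_comp, range_comp, ← image_comp] at hH
  have hrange : (e.trans H).trans e.symm '' range g = range g' := by
    calc _ = e.symm '' (H ∘ e '' range g) := image_comp e.symm (H ∘ e) (range g)
      _ = e.symm '' (e '' range g') := by rw [hH]
      _ = range g' := e.toEquiv.symm_image_image _
  obtain ⟨d, hd, C, hC⟩ := exists_abs_two_mul_sum_sub_sum_le h E E'
    (blockSigns_eq_one_or_neg_one A) (blockSigns_eq_one_or_neg_one B) _ hrange
  obtain ⟨n, hn, hn'⟩ := exists_lt_abs_two_mul_sum_blockSigns_sub hAB hd C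
  exact (hC n).elim hn.not_ge hn'.not_ge

lemma not_countable_range_of_injective {α β : Type*} [Uncountable α] {f : α → β}
    (hf : Function.Injective f) : ¬ (range f).Countable := fun hcount =>
  not_countable_iff.2 ‹_› <| countable_univ_iff.1 <| by
    simpa using hcount.preimage_of_injOn hf.injOn

lemma HasProperCore.exists_pairwise_not_equivalentEmbeddings (h : HasProperCore T c)
    (hT : Continuous T) :
    ∃ S : Set (InvLimit T → ℝ × ℝ), ¬ S.Countable ∧ (∀ g ∈ S, IsEmbedding g) ∧
      ∀ g₁ ∈ S, ∀ g₂ ∈ S, g₁ ≠ g₂ → ¬ EquivalentEmbeddings g₁ g₂ := by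
  have := compactSpace_invLimit h.unimodal.continuousOn
  choose g ℓ E using fun A : Set ℕ =>
    h.exists_isTurningEmbedding hT (blockSigns_eq_one_or_neg_one A)
  let e : ℂ ≃ₜ ℝ × ℝ := Complex.equivRealProdCLM.toHomeomorph
  have hne : ∀ A B, A ≠ B → ¬ EquivalentEmbeddings (e ∘ g A) (e ∘ g B) := fun A B hAB =>
    (E A).not_equivalentEmbeddings h hAB (E B) e
  have hinj : Function.Injective fun A => e ∘ g A := fun A B hgAB => by
    by_contra hAB
    exact hne A B hAB ⟨Homeomorph.refl _, (image_id _).trans (congrArg range hgAB)⟩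
  have : Uncountable (Set ℕ) :=
    uncountable_iff_forall_not_surjective.2 fun f => Function.cantor_surjective f
  refine ⟨range fun A => e ∘ g A, not_countable_range_of_injective hinj, ?_, ?_⟩
  · rintro _ ⟨A, rfl⟩
    exact e.isEmbedding.comp (E A).isEmbedding
  · rintro _ ⟨A, rfl⟩ _ ⟨B, rfl⟩ hAB
    exact hne A B fun heq => hAB (by rw [heq])

lemma invLimitSet_congr (hTT' : EqOn T T' (Icc 0 1)) : invLimitSet T = invLimitSet T' := by
  ext x
  exact and_congr_right fun hx => forall_congr' fun n => by rw [hTT' (hx (n + 1))]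

lemma IsUnimodal.congr (hT : IsUnimodal T c) (hTT' : EqOn T T' (Icc 0 1)) : IsUnimodal T' c :=
  ⟨hT.continuousOn.congr hTT'.symm, hT.mapsTo.congr hTT',
    (hTT' (left_mem_Icc.2 zero_le_one)).symm.trans hT.apply_zero, hT.crit_pos, hT.crit_lt_one,
    hT.strictMonoOn.congr (hTT'.mono (Icc_subset_Icc_right hT.crit_lt_one.le)),
    hT.strictAntiOn.congr (hTT'.mono (Icc_subset_Icc_left hT.crit_pos.le))⟩

lemma HasProperCore.congr (h : HasProperCore T c) (hTT' : EqOn T T' (Icc 0 1)) :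
    HasProperCore T' c where
  unimodal := h.unimodal.congr hTT'
  lt_apply_crit := by
    rw [← hTT' h.unimodal.crit_mem_Icc]
    exact h.lt_apply_crit
  apply_apply_crit_lt := by
    rw [← hTT' h.unimodal.crit_mem_Icc, ← hTT' (h.unimodal.mapsTo h.unimodal.crit_mem_Icc)]
    exact h.apply_apply_crit_lt

end Family

theorem stmt1_general (T : ℝ → ℝ) (c : ℝ) (hT : IsUnimodal T c) (hlt : c < T c)
    (hback : T (T c) < c) :
    ∃ S : Set (InvLimit T → ℝ × ℝ), ¬ S.Countable ∧
      (∀ g ∈ S, Topology.IsEmbedding g) ∧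
      ∀ g₁ ∈ S, ∀ g₂ ∈ S, g₁ ≠ g₂ → ¬ EquivalentEmbeddings g₁ g₂ := by
  let T' : ℝ → ℝ := fun t => T (projIcc 0 1 zero_le_one t)
  have hcont : Continuous T' := hT.continuousOn.comp_continuous
    (continuous_subtype_val.comp continuous_projIcc) fun t => (projIcc 0 1 zero_le_one t).2
  have hTT' : EqOn T T' (Icc 0 1) := fun t ht => by simp only [T', projIcc_of_mem _ ht]
  unfold InvLimit
  rw [invLimitSet_congr hTT']
  have h : HasProperCore T c := ⟨hT, hlt, hback⟩
  exact (h.congr hTT').exists_pairwise_not_equivalentEmbeddings hcont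

/-- If `T` is a unimodal map with positive topological entropy, then there are
uncountably many pairwise non-equivalent embeddings of `X` in the plane. -/
theorem stmt1 (T : ℝ → ℝ) (c : ℝ) (hT : IsUnimodal T c)
    (hent : 0 < Dynamics.coverEntropy T (Set.Icc 0 1)) :
    ∃ S : Set (InvLimit T → ℝ × ℝ), ¬ S.Countable ∧
      (∀ g ∈ S, Topology.IsEmbedding g) ∧
      ∀ g₁ ∈ S, ∀ g₂ ∈ S, g₁ ≠ g₂ → ¬ EquivalentEmbeddings g₁ g₂ :=
  have ⟨hlt, hback⟩ := hT.crit_turns_back_of_coverEntropy_pos hent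
  stmt1_general T c hT hlt hback
end
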